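/- Let q = ψ' + ψ² with ψ ∈ 𝒜(I_π). Then λ₁(I_π, q) ≥ 3, with equality if and only if q(x) = 1 + 2 tan²x; in the equality case an eigenfunction is cos²x. -/

import Mathlib

open MeasureTheory Real Set Filter
open scoped ENNReal

noncomputable section

/-- Test class for the Dirichlet eigenvalue with measure potential on `(a,b)`:
`C¹` functions vanishing outside the open interval (a core of `H¹₀`). -/
def TestFun (a b : ℝ) (v : ℝ → ℝ) : Prop :=
  ContDiff ℝ 1 v ∧ ∀ x ∉ Ioo a b, v x = 0

/-- Rayleigh quotient for the Dirichlet eigenvalue with (nonnegative, possibly infinite)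
measure potential `q` on the interval `(a,b)`. -/
def dirRQ (a b : ℝ) (q : Measure ℝ) (v : ℝ → ℝ) : ℝ≥0∞ :=
  ((∫⁻ x in Ioo a b, ENNReal.ofReal ((deriv v x) ^ 2)) +
      ∫⁻ x in Ioo a b, ENNReal.ofReal ((v x) ^ 2) ∂q) /
    ∫⁻ x in Ioo a b, ENNReal.ofReal ((v x) ^ 2)

/-- `λ₁((a,b), q)`, the first Dirichlet eigenvalue with measure potential `q`. -/
def lam1 (a b : ℝ) (q : Measure ℝ) : ℝ≥0∞ :=
  ⨅ (v : ℝ → ℝ)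
    (_ : TestFun a b v ∧ (∫⁻ x in Ioo a b, ENNReal.ofReal ((v x) ^ 2)) ≠ 0),
    dirRQ a b q v

/-- The class `𝒜(I_π)`: an increasing function `psi` with finiteness domain `dom ⊆ I_π`
(an interval), satisfying the improved-monotonicity gap condition, together with the
measure `nu` representing its distributional derivative `ψ'` on `dom`. -/
structure PsiA where
  dom : Set ℝ
  domSub : dom ⊆ Ioo (-(π / 2)) (π / 2)
  domConn : dom.OrdConnected
  psi : ℝ → ℝ
  mono : MonotoneOn psi dom
  gap : ∀ ⦃x⦄, x ∈ dom → ∀ ⦃y⦄, y ∈ dom → x < y →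
    2 * tan ((y - x) / 2) ≤ psi y - psi x
  nu : Measure ℝ
  nu_eq : ∀ ⦃x⦄, x ∈ dom → ∀ ⦃y⦄, y ∈ dom → x ≤ y →
    nu (Ioc x y) = ENNReal.ofReal (psi y - psi x)

/-- The measure `ψ'`, extended by `+∞` on `I_π \ dom ψ`. -/
def PsiA.derivM (P : PsiA) : Measure ℝ :=
  P.nu.restrict P.dom + (∞ : ℝ≥0∞) • volume.restrict (Ioo (-(π / 2)) (π / 2) \ P.dom)

/-- The measure `ψ² dx`, extended by `+∞` on `I_π \ dom ψ`. -/
def PsiA.sqM (P : PsiA) : Measure ℝ :=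
  (volume.restrict P.dom).withDensity (fun x => ENNReal.ofReal ((P.psi x) ^ 2)) +
    (∞ : ℝ≥0∞) • volume.restrict (Ioo (-(π / 2)) (π / 2) \ P.dom)

/-- The measure `q = ψ' + ψ²`, extended by `+∞` on `I_π \ dom ψ`. -/
def PsiA.qM (P : PsiA) : Measure ℝ :=
  P.nu.restrict P.dom +
    (volume.restrict P.dom).withDensity (fun x => ENNReal.ofReal ((P.psi x) ^ 2)) +
    (∞ : ℝ≥0∞) • volume.restrict (Ioo (-(π / 2)) (π / 2) \ P.dom)

/-- The function `cos² x` on `I_π`, extended by zero. -/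
def cosSq : ℝ → ℝ := fun x => if x ∈ Ioo (-(π / 2)) (π / 2) then cos x ^ 2 else 0

/-- The measure with density `1 + 2 tan² x` on `I_π`. -/
def tanWeight : Measure ℝ :=
  (volume.restrict (Ioo (-(π / 2)) (π / 2))).withDensity
    fun x => ENNReal.ofReal (1 + 2 * tan x ^ 2)


/-! ### Part 1: the modified Pruefer equation -/

def GG (l p t : ℝ) : ℝ := cos t ^ 2 + l * sin t ^ 2 - 2 * p * (sin t * cos t)

def FF (l p t : ℝ) : ℝ := max (GG l p t) (1 / 4)

lemma FF_pos (l p t : ℝ) : 0 < FF l p t := lt_of_lt_of_le (by norm_num) (le_max_right _ _)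

lemma FF_ge (l p t : ℝ) : 1 / 4 ≤ FF l p t := le_max_right _ _

lemma GG_hasDerivAt (l p t : ℝ) :
    HasDerivAt (GG l p) ((l - 1) * (2 * sin t * cos t) - 2 * p * (cos t ^ 2 - sin t ^ 2)) t := by
  have h1 := (hasDerivAt_cos t).pow 2
  have h2 := ((hasDerivAt_sin t).pow 2).const_mul l
  have h3 := ((hasDerivAt_sin t).mul (hasDerivAt_cos t)).const_mul (2 * p)
  have := (h1.add h2).sub h3
  refine (this.congr_deriv ?_)
  simp only [Nat.cast_ofNat, Nat.add_one_sub_one, pow_one]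
  ring

lemma GG_abs_le {l p t M : ℝ} (hp : |p| ≤ M) : |GG l p t| ≤ 1 + |l| + 2 * M := by
  have hs := sin_sq_add_cos_sq t
  have h1 : |cos t ^ 2| ≤ 1 := by rw [abs_le]; constructor <;> nlinarith [sq_nonneg (sin t), sq_nonneg (cos t)]
  have h2 : |l * sin t ^ 2| ≤ |l| := by
    rw [abs_mul, abs_of_nonneg (sq_nonneg (sin t))]
    exact mul_le_of_le_one_right (abs_nonneg _) (by nlinarith [sq_nonneg (cos t)])
  have h3 : |2 * p * (sin t * cos t)| ≤ 2 * M := by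
    rw [abs_mul, abs_mul, abs_of_pos (by norm_num : (0:ℝ) < 2)]
    have : |sin t * cos t| ≤ 1 := by
      rw [abs_le]; constructor <;> nlinarith [sq_nonneg (sin t + cos t), sq_nonneg (sin t - cos t)]
    have h0 := abs_nonneg p
    nlinarith [abs_nonneg (sin t * cos t)]
  unfold GG
  calc _ ≤ |cos t ^ 2 + l * sin t ^ 2| + |2 * p * (sin t * cos t)| := abs_sub _ _
    _ ≤ |cos t ^ 2| + |l * sin t ^ 2| + |2 * p * (sin t * cos t)| := by gcongr; exact abs_add_le _ _
    _ ≤ _ := by linarith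

lemma FF_lip {l p M : ℝ} (hp : |p| ≤ M) :
    LipschitzWith (Real.toNNReal (|l - 1| + 2 * M)) (FF l p) := by
  apply LipschitzWith.max_const
  apply lipschitzWith_of_nnnorm_deriv_le
  · exact fun t => (GG_hasDerivAt l p t).differentiableAt
  · intro t
    rw [(GG_hasDerivAt l p t).deriv, ← NNReal.coe_le_coe, Real.coe_toNNReal', coe_nnnorm,
      Real.norm_eq_abs]
    refine le_trans ?_ (le_max_left _ _)
    have hs := sin_sq_add_cos_sq t
    have h1 : |2 * sin t * cos t| ≤ 1 := by
      rw [abs_le]; constructor <;> nlinarith [sq_nonneg (sin t + cos t), sq_nonneg (sin t - cos t)]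
    have h2 : |cos t ^ 2 - sin t ^ 2| ≤ 1 := by
      rw [abs_le]; constructor <;> nlinarith [sq_nonneg (sin t), sq_nonneg (cos t)]
    calc _ ≤ |(l - 1) * (2 * sin t * cos t)| + |2 * p * (cos t ^ 2 - sin t ^ 2)| := abs_sub _ _
      _ = |l - 1| * |2 * sin t * cos t| + 2 * |p| * |cos t ^ 2 - sin t ^ 2| := by
        rw [abs_mul, abs_mul (2 * p), abs_mul 2 p, abs_of_pos (by norm_num : (0:ℝ) < 2)]
      _ ≤ |l - 1| * 1 + 2 * M * 1 := by
        have := abs_nonneg p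
        gcongr
        linarith
      _ = _ := by ring

lemma pruefer_exists (l : ℝ) {p : ℝ → ℝ} (hpc : Continuous p) {M : ℝ} (hM : ∀ x, |p x| ≤ M)
    {α β : ℝ} (hαβ : α < β) :
    ∃ θ ξ : ℝ → ℝ, θ α = -(π / 2) ∧ (∀ x ∈ Icc α β, HasDerivAt θ (FF l (p x) (θ x)) x) ∧
      StrictMono θ ∧ Continuous θ ∧ Continuous ξ ∧ StrictMono ξ ∧
      (∀ x, ξ (θ x) = x) ∧ (∀ t, θ (ξ t) = t) := by
  have hM0 : 0 ≤ M := (abs_nonneg _).trans (hM 0)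
  let L : NNReal := Real.toNNReal (1 + |l| + 2 * M)
  have hL : (L : ℝ) = 1 + |l| + 2 * M := Real.coe_toNNReal _ (by positivity)
  let A : NNReal := L * Real.toNNReal (β - α + 1)
  have hA : (A : ℝ) = L * (β - α + 1) := by
    have h : ((Real.toNNReal (β - α + 1) : NNReal) : ℝ) = β - α + 1 :=
      Real.coe_toNNReal _ (by linarith)
    simp only [A, NNReal.coe_mul, h]
  have hpl : IsPicardLindelof (fun x t => FF l (p x) t) (tmin := α - 1) (tmax := β + 1)
      ⟨α, by constructor <;> linarith⟩ (-(π / 2)) A 0 L (Real.toNNReal (|l - 1| + 2 * M)) := by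
    refine ⟨fun x _ => (FF_lip (hM x)).lipschitzOnWith, fun t _ => ?_, fun x _ t _ => ?_, ?_⟩
    · apply Continuous.continuousOn
      unfold FF GG
      fun_prop
    · rw [hL, Real.norm_eq_abs, abs_of_pos (FF_pos _ _ _)]
      refine max_le ((le_abs_self _).trans (GG_abs_le (hM x))) ?_
      have := abs_nonneg l
      linarith
    · rw [hA]
      simp only [NNReal.coe_zero, sub_zero]
      gcongr
      apply max_le <;> linarith
  obtain ⟨φ, h0, hφ⟩ := hpl.exists_eq_forall_mem_Icc_hasDerivWithinAt₀
  simp only at h0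
  have hmono : StrictMonoOn φ (Icc (α - 1) (β + 1)) := by
    apply strictMonoOn_of_deriv_pos (convex_Icc _ _) (fun x hx => (hφ x hx).continuousWithinAt)
    intro x hx
    rw [interior_Icc] at hx
    rw [((hφ x (Ioo_subset_Icc_self hx)).hasDerivAt (Icc_mem_nhds hx.1 hx.2)).deriv]
    exact FF_pos _ _ _
  have hle : α - 1 ≤ β + 1 := by linarith
  let pr : ℝ → ℝ := fun x => max (α - 1) (min x (β + 1))
  have hpr : ∀ x, pr x ∈ Icc (α - 1) (β + 1) := fun x =>
    ⟨le_max_left _ _, max_le hle (min_le_right _ _)⟩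
  have hprc : Continuous pr := by fun_prop
  have hpreq : ∀ x ∈ Icc (α - 1) (β + 1), pr x = x := fun x hx => by
    simp only [pr]; rw [min_eq_left hx.2, max_eq_right hx.1]
  let θ : ℝ → ℝ := fun x => φ (pr x) + (x - pr x)
  have hθeq : ∀ x ∈ Icc (α - 1) (β + 1), θ x = φ x := fun x hx => by
    simp only [θ]; rw [hpreq x hx]; ring
  have hprmono : Monotone pr := by
    intro x y hxy
    exact max_le_max le_rfl (min_le_min hxy le_rfl)
  have hprlip : ∀ x y, x ≤ y → pr y - pr x ≤ y - x := by
    intro x y hxy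
    simp only [pr]
    rcases le_total x (β + 1) with h1 | h1 <;> rcases le_total y (β + 1) with h2 | h2 <;>
    rcases le_total (α - 1) x with h3 | h3 <;> rcases le_total (α - 1) y with h4 | h4 <;>
    simp only [min_eq_left, min_eq_right, max_eq_left, max_eq_right, h1, h2, h3, h4, hle] <;> linarith
  have hθmono : StrictMono θ := by
    intro x y hxy
    have hm := hprmono hxy.le
    have hl := hprlip x y hxy.le
    have h1 : φ (pr x) ≤ φ (pr y) := hmono.monotoneOn (hpr x) (hpr y) hm
    rcases hm.lt_or_eq with h | h
    · have h1 : φ (pr x) < φ (pr y) := hmono (hpr x) (hpr y) h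
      simp only [θ]; linarith
    · simp only [θ]; rw [h]; linarith
  have hθc : Continuous θ := by
    have : Continuous (fun x => φ (pr x)) := by
      rw [← continuousOn_univ]
      exact ContinuousOn.comp (fun x hx => (hφ x hx).continuousWithinAt) hprc.continuousOn
        (fun x _ => hpr x)
    exact this.add (continuous_id.sub hprc)
  have hprtop : ∀ x, β + 1 ≤ x → pr x = β + 1 := fun x hx => by
    simp only [pr]; rw [min_eq_right hx, max_eq_right hle]
  have hprbot : ∀ x, x ≤ α - 1 → pr x = α - 1 := fun x hx => by
    simp only [pr]; rw [max_eq_left]; exact (min_le_left _ _).trans hx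
  have hsurj : Function.Surjective θ := by
    apply hθc.surjective
    · apply tendsto_atTop_mono' _ _ (tendsto_atTop_add_const_left _ (φ (β + 1) - (β + 1)) tendsto_id)
      filter_upwards [eventually_ge_atTop (β + 1)] with x hx
      simp only [θ, id]; rw [hprtop x hx]; linarith
    · apply tendsto_atBot_mono' _ _ (tendsto_atBot_add_const_left _ (φ (α - 1) - (α - 1)) tendsto_id)
      filter_upwards [eventually_le_atBot (α - 1)] with x hx
      simp only [θ, id]; rw [hprbot x hx]; linarith
  let e := hθmono.orderIsoOfSurjective θ hsurj
  refine ⟨θ, e.symm, ?_, ?_, hθmono, hθc, e.symm.continuous, e.symm.strictMono, ?_, ?_⟩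
  · rw [hθeq _ (by constructor <;> linarith), h0]
  · intro x hx
    have hx' : x ∈ Icc (α - 1) (β + 1) := ⟨by linarith [hx.1], by linarith [hx.2]⟩
    have hn : Icc (α - 1) (β + 1) ∈ nhds x := Icc_mem_nhds (by linarith [hx.1]) (by linarith [hx.2])
    rw [hθeq x hx']
    refine ((hφ x hx').hasDerivAt hn).congr_of_eventuallyEq ?_
    filter_upwards [hn] with z hz using hθeq z hz
  · exact fun x => e.symm_apply_apply x
  · exact fun t => e.apply_symm_apply t

/-! ### Part 2: the two-point comparison -/

structure Cfg (l : ℝ) (p θ ξ : ℝ → ℝ) (a b : ℝ) : Prop where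
  ha : -(π / 2) < a
  hb : b < π / 2
  θa : θ a = -(π / 2)
  θb : θ b = π / 2
  der : ∀ x ∈ Icc a b, HasDerivAt θ (FF l (p x) (θ x)) x
  gap : ∀ x ∈ Icc a b, ∀ y ∈ Icc a b, x < y → 2 * tan ((y - x) / 2) ≤ p y - p x
  ξc : Continuous ξ
  ξm : StrictMono ξ
  ξθ : ∀ x, ξ (θ x) = x
  θξ : ∀ t, θ (ξ t) = t

lemma alg_key {g1 g2 B : ℝ} (hB : 0 ≤ B) (h : g1 + g2 ≤ 2 * (1 + B)) :
    (((max g1 (1 / 4))⁻¹ - (max g2 (1 / 4))⁻¹) / 2) ^ 2 ≤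
      4 * (((max g1 (1 / 4))⁻¹ + (max g2 (1 / 4))⁻¹) / 2 - 1 + B) := by
  have hR : ∀ g : ℝ, 0 < (max g (1 / 4))⁻¹ ∧ (max g (1 / 4))⁻¹ ≤ 4 := by
    intro g
    have h1 : (1 / 4 : ℝ) ≤ max g (1 / 4) := le_max_right _ _
    refine ⟨inv_pos.mpr (by linarith), ?_⟩
    rw [inv_le_comm₀ (by linarith) (by norm_num)]
    linarith
  obtain ⟨hP0, hP4⟩ := hR g1
  obtain ⟨hR0, hR4⟩ := hR g2
  rcases le_total g1 (1 / 4) with h1 | h1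
  · rw [max_eq_right h1] at *
    have : ((1 / 4 : ℝ))⁻¹ = 4 := by norm_num
    rw [this]
    nlinarith
  rcases le_total g2 (1 / 4) with h2 | h2
  · rw [max_eq_right h2] at *
    have : ((1 / 4 : ℝ))⁻¹ = 4 := by norm_num
    rw [this]
    nlinarith
  rw [max_eq_left h1, max_eq_left h2] at *
  set P := g1⁻¹ with hP
  set R := g2⁻¹ with hR
  have e1 : g1 * P = 1 := mul_inv_cancel₀ (by linarith)
  have e2 : g2 * R = 1 := mul_inv_cancel₀ (by linarith)
  have hPR : P + R ≤ 2 * (1 + B) * (P * R) := by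
    have : (g1 + g2) * (P * R) ≤ 2 * (1 + B) * (P * R) :=
      mul_le_mul_of_nonneg_right h (by positivity)
    calc P + R = (g1 + g2) * (P * R) := by linear_combination (-R) * e1 - P * e2
      _ ≤ _ := this
  set d := (P + R) / 2 with hd
  set m := (P - R) / 2 with hm
  have h3 : d ≤ (1 + B) * (d ^ 2 - m ^ 2) := by
    have : d ^ 2 - m ^ 2 = P * R := by rw [hd, hm]; ring
    rw [this]; linarith
  have hd0 : 0 < d := by positivity
  have hd4 : d ≤ 4 := by linarith
  have h4 : d / (1 + B) ≤ d ^ 2 - m ^ 2 := by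
    rw [div_le_iff₀ (by linarith)]; linarith
  have h5 : 1 - B ≤ 1 / (1 + B) := by
    rw [le_div_iff₀ (by linarith)]; nlinarith
  have h6 : m ^ 2 ≤ d * (d - 1 / (1 + B)) := by
    have : d * (d - 1 / (1 + B)) = d ^ 2 - d / (1 + B) := by ring
    linarith
  have h7 : 0 ≤ d - 1 / (1 + B) := by
    by_contra hcon
    push Not at hcon
    nlinarith [sq_nonneg m]
  nlinarith

lemma GG_sum_le {l p1 p2 t t1 d : ℝ} (hl : 3 ≤ l) (ht : 0 ≤ t) (htt : t ≤ t1) (ht1 : t1 < π / 2)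
    (hd : 0 ≤ d) (hd1 : d < π / 2) (hp : 2 * tan d ≤ p2 - p1) :
    GG l p2 t + GG l p1 (-t) ≤ 2 * (1 + ((l - 3) + 2 / cos t1 * max (t - d) 0)) := by
  have hct1 : 0 < cos t1 := cos_pos_of_mem_Ioo ⟨by linarith, ht1⟩
  have hct : 0 < cos t := cos_pos_of_mem_Ioo ⟨by linarith, by linarith⟩
  have hcd : 0 < cos d := cos_pos_of_mem_Ioo ⟨by linarith, by linarith⟩
  have hst : 0 ≤ sin t := sin_nonneg_of_nonneg_of_le_pi ht (by linarith)
  have hst1 : sin t ≤ 1 := sin_le_one t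
  have hs := sin_sq_add_cos_sq t
  have key : sin t - cos t * tan d ≤ max (t - d) 0 / cos t1 := by
    have e : sin t - cos t * tan d = sin (t - d) / cos d := by
      rw [tan_eq_sin_div_cos, sin_sub]; field_simp
    rw [e]
    rcases le_total t d with h | h
    · rw [max_eq_right (by linarith), zero_div]
      apply div_nonpos_of_nonpos_of_nonneg _ hcd.le
      exact sin_nonpos_of_nonpos_of_neg_pi_le (by linarith) (by linarith)
    · rw [max_eq_left (by linarith)]
      have h1 : sin (t - d) ≤ t - d := sin_le (by linarith)
      have h2 : cos t1 ≤ cos d := cos_le_cos_of_nonneg_of_le_pi hd (by linarith) (by linarith)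
      calc sin (t - d) / cos d ≤ (t - d) / cos d := by gcongr
        _ ≤ (t - d) / cos t1 := by
          apply div_le_div_of_nonneg_left (by linarith) hct1 h2
  have hm : 0 ≤ max (t - d) 0 / cos t1 := div_nonneg (le_max_right _ _) hct1.le
  unfold GG
  rw [cos_neg, sin_neg]
  have h1 : 2 * tan d * (sin t * cos t) ≤ (p2 - p1) * (sin t * cos t) :=
    mul_le_mul_of_nonneg_right hp (by positivity)
  have h2 : sin t * (sin t - cos t * tan d) ≤ max (t - d) 0 / cos t1 := by
    calc _ ≤ sin t * (max (t - d) 0 / cos t1) := mul_le_mul_of_nonneg_left key hst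
      _ ≤ 1 * (max (t - d) 0 / cos t1) := mul_le_mul_of_nonneg_right hst1 hm
      _ = _ := one_mul _
  have h3 : 2 / cos t1 * max (t - d) 0 = 2 * (max (t - d) 0 / cos t1) := by ring
  rw [h3]
  have h4 : (l - 3) * sin t ^ 2 ≤ l - 3 := by nlinarith [sq_nonneg (cos t)]
  nlinarith

section
variable {l : ℝ} {p θ ξ : ℝ → ℝ} {a b : ℝ}

lemma Cfg.ξ_mem (h : Cfg l p θ ξ a b) {t : ℝ} (ht : t ∈ Icc (-(π / 2)) (π / 2)) :
    ξ t ∈ Icc a b := by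
  constructor
  · rw [← h.ξθ a, h.θa]; exact h.ξm.monotone ht.1
  · rw [← h.ξθ b, h.θb]; exact h.ξm.monotone ht.2

lemma Cfg.ξ_der (h : Cfg l p θ ξ a b) {t : ℝ} (ht : t ∈ Icc (-(π / 2)) (π / 2)) :
    HasDerivAt ξ (FF l (p (ξ t)) t)⁻¹ t := by
  have h1 := h.der (ξ t) (h.ξ_mem ht)
  rw [h.θξ] at h1
  exact HasDerivAt.of_local_left_inverse h.ξc.continuousAt h1 (FF_pos _ _ _).ne'
    (Eventually.of_forall h.θξ)

lemma Cfg.basic (h : Cfg l p θ ξ a b) (hl : 3 ≤ l) {t1 : ℝ} (h0 : 0 ≤ t1) (h1 : t1 < π / 2) :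
    ∀ t ∈ Icc 0 t1, t - (ξ t - ξ (-t)) / 2 ≤ (l - 3) * exp (2 / cos t1 * t1) ∧
      (((FF l (p (ξ t)) t)⁻¹ - (FF l (p (ξ (-t))) (-t))⁻¹) / 2) ^ 2 ≤
      4 * (((FF l (p (ξ t)) t)⁻¹ + (FF l (p (ξ (-t))) (-t))⁻¹) / 2 - 1
        + (l - 3) * exp (2 / cos t1 * t1)) := by
  have hct1 : 0 < cos t1 := cos_pos_of_mem_Ioo ⟨by linarith, h1⟩
  set L := 2 / cos t1 with hL
  have hL2 : 2 ≤ L := by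
    rw [hL, le_div_iff₀ hct1]; linarith [cos_le_one t1]
  have hd : ∀ t ∈ Icc 0 t1, HasDerivAt (fun t => t - (ξ t - ξ (-t)) / 2)
      (1 - ((FF l (p (ξ t)) t)⁻¹ + (FF l (p (ξ (-t))) (-t))⁻¹) / 2) t := by
    intro t ht
    have d1 := h.ξ_der (t := t) ⟨by linarith [ht.1], by linarith [ht.2]⟩
    have d2 := h.ξ_der (t := -t) ⟨by linarith [ht.2], by linarith [ht.1]⟩
    have d3 := d2.comp t (hasDerivAt_neg t)
    have := (hasDerivAt_id t).sub ((d1.sub d3).div_const 2)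
    refine this.congr_deriv ?_
    ring
  have hkey : ∀ t ∈ Icc 0 t1, (((FF l (p (ξ t)) t)⁻¹ - (FF l (p (ξ (-t))) (-t))⁻¹) / 2) ^ 2 ≤
      4 * (((FF l (p (ξ t)) t)⁻¹ + (FF l (p (ξ (-t))) (-t))⁻¹) / 2 - 1
        + ((l - 3) + L * max (t - (ξ t - ξ (-t)) / 2) 0)) := by
    intro t ht
    apply alg_key
    · have : 0 ≤ max (t - (ξ t - ξ (-t)) / 2) 0 := le_max_right _ _
      have : 0 ≤ L * max (t - (ξ t - ξ (-t)) / 2) 0 := by positivity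
      linarith
    · have m1 := h.ξ_mem (t := t) ⟨by linarith [ht.1], by linarith [ht.2]⟩
      have m2 := h.ξ_mem (t := -t) ⟨by linarith [ht.2], by linarith [ht.1]⟩
      have hle : ξ (-t) ≤ ξ t := h.ξm.monotone (by linarith [ht.1])
      apply GG_sum_le hl ht.1 ht.2 h1
      · linarith
      · linarith [m1.2, m2.1, h.ha, h.hb]
      · rcases hle.lt_or_eq with hlt | heq
        · exact h.gap _ m2 _ m1 hlt
        · rw [heq]; simp
  have hmu : 0 ≤ l - 3 := by linarith
  have hE : ∀ t ∈ Icc 0 t1, t - (ξ t - ξ (-t)) / 2 ≤ (l - 3) * ((exp (L * t) - 1) / L) := by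
    have hκ : ∀ κ > 0, ∀ t ∈ Icc 0 t1,
        t - (ξ t - ξ (-t)) / 2 ≤ (l - 3 + κ) * ((exp (L * t) - 1) / L) := by
      intro κ hκ
      refine image_le_of_deriv_right_lt_deriv_boundary
        (f' := fun t => 1 - ((FF l (p (ξ t)) t)⁻¹ + (FF l (p (ξ (-t))) (-t))⁻¹) / 2)
        (B' := fun t => (l - 3 + κ) * exp (L * t))
        (fun t ht => (hd t ht).continuousAt.continuousWithinAt)
        (fun t ht => (hd t (Ico_subset_Icc_self ht)).hasDerivWithinAt) ?_ ?_ ?_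
      · simp
      · intro t
        have e1 : HasDerivAt (fun t => exp (L * t)) (exp (L * t) * (L * 1)) t :=
          ((hasDerivAt_id t).const_mul L).exp
        have := ((e1.sub_const 1).div_const L).const_mul (l - 3 + κ)
        refine this.congr_deriv ?_
        field_simp
      · intro t ht heq
        have hk := hkey t (Ico_subset_Icc_self ht)
        have hexp : 1 ≤ exp (L * t) := one_le_exp (mul_nonneg (by linarith) ht.1)
        have hnn : 0 ≤ t - (ξ t - ξ (-t)) / 2 := by
          rw [heq]
          exact mul_nonneg (by linarith) (div_nonneg (by linarith) (by linarith))
        rw [max_eq_left hnn, heq] at hk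
        have e2 : L * ((l - 3 + κ) * ((exp (L * t) - 1) / L)) = (l - 3 + κ) * (exp (L * t) - 1) := by
          field_simp
        rw [e2] at hk
        have := sq_nonneg (((FF l (p (ξ t)) t)⁻¹ - (FF l (p (ξ (-t))) (-t))⁻¹) / 2)
        linarith
    intro t ht
    refine le_of_forall_pos_le_add fun ε hε => ?_
    have hexp : 1 ≤ exp (L * t) := one_le_exp (mul_nonneg (by linarith) ht.1)
    have hD : 0 ≤ (exp (L * t) - 1) / L := div_nonneg (by linarith) (by linarith)
    set D := (exp (L * t) - 1) / L
    have := hκ (ε / (D + 1)) (by positivity) t ht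
    have h3 : ε / (D + 1) * D ≤ ε := by
      rw [div_mul_eq_mul_div, div_le_iff₀ (by linarith)]; nlinarith
    linarith
  intro t ht
  have hexp : 1 ≤ exp (L * t) := one_le_exp (mul_nonneg (by linarith) ht.1)
  have hexp1 : exp (L * t) ≤ exp (L * t1) := exp_le_exp.mpr (mul_le_mul_of_nonneg_left ht.2 (by linarith))
  have hb1 : (l - 3) * ((exp (L * t) - 1) / L) ≤ (l - 3) * exp (L * t1) := by
    apply mul_le_mul_of_nonneg_left _ hmu
    rw [div_le_iff₀ (by linarith)]
    nlinarith
  refine ⟨(hE t ht).trans hb1, (hkey t ht).trans ?_⟩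
  have h5 : L * max (t - (ξ t - ξ (-t)) / 2) 0 ≤ (l - 3) * (exp (L * t1) - 1) := by
    have : max (t - (ξ t - ξ (-t)) / 2) 0 ≤ (l - 3) * ((exp (L * t) - 1) / L) :=
      max_le (hE t ht) (mul_nonneg hmu (div_nonneg (by linarith) (by linarith)))
    calc _ ≤ L * ((l - 3) * ((exp (L * t) - 1) / L)) := mul_le_mul_of_nonneg_left this (by linarith)
      _ = (l - 3) * (exp (L * t) - 1) := by field_simp
      _ ≤ _ := mul_le_mul_of_nonneg_left (by linarith) hmu
  linarith

lemma Cfg.false_of_three (h : Cfg 3 p θ ξ a b) : False := by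
  have hpi := pi_pos
  have hab : b - a < π := by linarith [h.ha, h.hb]
  have hab' : a ≤ b := by
    rw [← h.ξθ a, ← h.ξθ b, h.θa, h.θb]; exact h.ξm.monotone (by linarith)
  obtain ⟨t, ht1, ht2⟩ : ∃ t, (b - a) / 2 < t ∧ t < π / 2 := exists_between (by linarith)
  have h0 : 0 ≤ t := by linarith
  have := (h.basic le_rfl h0 ht2 t ⟨h0, le_rfl⟩).1
  simp only [sub_self, zero_mul] at this
  have m1 := h.ξ_mem (t := t) ⟨by linarith, by linarith⟩
  have m2 := h.ξ_mem (t := -t) ⟨by linarith, by linarith⟩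
  linarith [m1.2, m2.1]

end

set_option maxHeartbeats 1000000 in
lemma cfg_close {t0 ε : ℝ} (h0 : 0 ≤ t0) (ht0 : t0 < π / 2) (hε : 0 < ε) :
    ∃ μ > 0, ∀ l : ℝ, 3 ≤ l → l ≤ 3 + μ → ∀ (p θ ξ : ℝ → ℝ) (a b : ℝ), Cfg l p θ ξ a b →
      ∀ t ∈ Icc (-t0) t0, |ξ t - t| ≤ ε := by
  have hpi := pi_pos
  have hpi4 := pi_le_four
  set ρ := ε / 8 with hρ
  have hρ0 : 0 < ρ := by positivity
  set κ := min (ε / 20) (ε * ρ / 16) with hκ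
  have hκ0 : 0 < κ := lt_min (by positivity) (by positivity)
  have hκ1 : κ ≤ ε / 20 := min_le_left _ _
  have hκ2 : 4 * κ / ρ ≤ ε / 4 := by
    rw [div_le_iff₀ hρ0]
    have : κ ≤ ε * ρ / 16 := min_le_right _ _
    linarith
  obtain ⟨t1, ht1a, ht1⟩ : ∃ t, max t0 (π / 2 - κ) < t ∧ t < π / 2 :=
    exists_between (max_lt ht0 (by linarith))
  have ht01 : t0 < t1 := (le_max_left _ _).trans_lt ht1a
  have hτ : π / 2 - t1 ≤ κ := by linarith [(le_max_right t0 (π / 2 - κ)).trans_lt ht1a]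
  have h01 : 0 ≤ t1 := by linarith
  set K := exp (2 / cos t1 * t1) with hK
  have hK0 : 0 < K := exp_pos _
  refine ⟨κ / K, by positivity, fun l hl hl2 p θ ξ a b h => ?_⟩
  set ν := (l - 3) * K with hν
  have hν0 : 0 ≤ ν := mul_nonneg (by linarith) hK0.le
  have hνκ : ν ≤ κ := by
    have : l - 3 ≤ κ / K := by linarith
    rw [le_div_iff₀ hK0] at this
    exact this
  have hb := h.basic hl h01 ht1
  rw [← hK, ← hν] at hb
  let δ : ℝ → ℝ := fun t => (ξ t - ξ (-t)) / 2
  let m : ℝ → ℝ := fun t => (ξ t + ξ (-t)) / 2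
  let δ' : ℝ → ℝ := fun t => ((FF l (p (ξ t)) t)⁻¹ + (FF l (p (ξ (-t))) (-t))⁻¹) / 2
  let m' : ℝ → ℝ := fun t => ((FF l (p (ξ t)) t)⁻¹ - (FF l (p (ξ (-t))) (-t))⁻¹) / 2
  have hb1 : ∀ t ∈ Icc 0 t1, t - δ t ≤ ν := fun t ht => (hb t ht).1
  have hb2 : ∀ t ∈ Icc 0 t1, m' t ^ 2 ≤ 4 * (δ' t - 1 + ν) := fun t ht => (hb t ht).2
  have hdd : ∀ t ∈ Icc 0 t1, HasDerivAt δ (δ' t) t ∧ HasDerivAt m (m' t) t := by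
    intro t ht
    have d1 := h.ξ_der (t := t) ⟨by linarith [ht.1], by linarith [ht.2]⟩
    have d2 := h.ξ_der (t := -t) ⟨by linarith [ht.2], by linarith [ht.1]⟩
    have d3 := d2.comp t (hasDerivAt_neg t)
    refine ⟨((d1.sub d3).div_const 2).congr_deriv ?_, ((d1.add d3).div_const 2).congr_deriv ?_⟩
    · simp only [δ']; ring
    · simp only [m']; ring
  have mon : ∀ (f f' : ℝ → ℝ), (∀ t ∈ Icc 0 t1, HasDerivAt f (f' t) t) →
      (∀ t ∈ Icc 0 t1, 0 ≤ f' t) → ∀ t ∈ Icc 0 t1, f t ≤ f t1 := by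
    intro f f' hf hf' t ht
    have : MonotoneOn f (Icc 0 t1) := by
      apply monotoneOn_of_deriv_nonneg (convex_Icc _ _)
        (fun s hs => (hf s hs).continuousAt.continuousWithinAt)
      · intro s hs
        rw [interior_Icc] at hs
        exact (hf s (Ioo_subset_Icc_self hs)).differentiableAt.differentiableWithinAt
      · intro s hs
        rw [interior_Icc] at hs
        rw [(hf s (Ioo_subset_Icc_self hs)).deriv]
        exact hf' s (Ioo_subset_Icc_self hs)
    exact this ht ⟨h01, le_rfl⟩ ht.2
  have hδ'1 : ∀ t ∈ Icc 0 t1, 0 ≤ δ' t - 1 + ν := fun t ht => by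
    have := hb2 t ht
    nlinarith [sq_nonneg (m' t)]
  have M1 := mon (fun t => δ t - t + ν * t) (fun t => δ' t - 1 + ν)
    (fun t ht => by
      have := ((hdd t ht).1.sub (hasDerivAt_id t)).add ((hasDerivAt_id t).const_mul ν)
      exact this.congr_deriv (by ring)) hδ'1
  have hm' : ∀ t ∈ Icc 0 t1, |m' t| ≤ ρ + (δ' t - 1 + ν) / ρ := by
    intro t ht
    have h2 := hb2 t ht
    have h3 : m' t ^ 2 / (4 * ρ) ≤ (δ' t - 1 + ν) / ρ := by
      rw [div_le_div_iff₀ (by positivity) hρ0]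
      nlinarith
    have h4 : |m' t| ≤ ρ + m' t ^ 2 / (4 * ρ) := by
      rw [← sub_le_iff_le_add', le_div_iff₀ (by positivity), ← sq_abs (m' t)]
      nlinarith [sq_nonneg (|m' t| - 2 * ρ)]
    linarith
  have M2 := mon (fun t => ρ * t + (δ t - t + ν * t) / ρ + m t)
    (fun t => ρ + (δ' t - 1 + ν) / ρ + m' t)
    (fun t ht => by
      have := (((hasDerivAt_id t).const_mul ρ).add ((((hdd t ht).1.sub (hasDerivAt_id t)).add
        ((hasDerivAt_id t).const_mul ν)).div_const ρ)).add (hdd t ht).2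
      exact this.congr_deriv (by ring))
    (fun t ht => by have := neg_abs_le (m' t); linarith [hm' t ht])
  have M3 := mon (fun t => ρ * t + (δ t - t + ν * t) / ρ - m t)
    (fun t => ρ + (δ' t - 1 + ν) / ρ - m' t)
    (fun t ht => by
      have := (((hasDerivAt_id t).const_mul ρ).add ((((hdd t ht).1.sub (hasDerivAt_id t)).add
        ((hasDerivAt_id t).const_mul ν)).div_const ρ)).sub (hdd t ht).2
      exact this.congr_deriv (by ring))
    (fun t ht => by have := le_abs_self (m' t); linarith [hm' t ht])
  have m1 := h.ξ_mem (t := t1) ⟨by linarith, by linarith⟩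
  have m2 := h.ξ_mem (t := -t1) ⟨by linarith, by linarith⟩
  have ha := h.ha
  have hb' := h.hb
  have hδ1 : δ t1 ≤ π / 2 := by simp only [δ]; linarith [m1.2, m2.1]
  have hδ1' : t1 - δ t1 ≤ ν := hb1 t1 ⟨h01, le_rfl⟩
  have hm1 : |m t1| ≤ 2 * κ := by
    simp only [δ] at hδ1'
    simp only [m]
    rw [abs_le]
    constructor <;> linarith [m1.2, m2.1]
  have hfin : ∀ t ∈ Icc 0 t0, |δ t - t| ≤ 3 * κ ∧ |m t| ≤ 2 * κ + (2 * ρ + 4 * κ / ρ) := by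
    intro t ht
    have ht' : t ∈ Icc 0 t1 := ⟨ht.1, by linarith [ht.2]⟩
    have k1 := hb1 t ht'
    have k2 : δ t - t + ν * t ≤ δ t1 - t1 + ν * t1 := M1 t ht'
    have k3 : ρ * t + (δ t - t + ν * t) / ρ + m t ≤
      ρ * t1 + (δ t1 - t1 + ν * t1) / ρ + m t1 := M2 t ht'
    have k4 : ρ * t + (δ t - t + ν * t) / ρ - m t ≤
      ρ * t1 + (δ t1 - t1 + ν * t1) / ρ - m t1 := M3 t ht'
    clear M1 M2 M3 hm' hδ'1 mon hdd hb1 hb2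
    have hνt : ν * (t1 - t) ≤ 2 * ν := by nlinarith [ht.1]
    have hρt : ρ * (t1 - t) ≤ 2 * ρ := by nlinarith [ht.1]
    rw [mul_sub] at hνt hρt
    have e : (δ t1 - t1 + ν * t1) - (δ t - t + ν * t) ≤ 4 * κ := by
      have : 0 ≤ ν * t := mul_nonneg hν0 ht.1
      linarith
    have e2 : (δ t1 - t1 + ν * t1) / ρ - (δ t - t + ν * t) / ρ ≤ 4 * κ / ρ := by
      rw [← sub_div]
      exact div_le_div_of_nonneg_right e hρ0.le
    have := abs_le.mp hm1
    refine ⟨abs_le.mpr ⟨by linarith, by linarith⟩, abs_le.mpr ⟨by linarith, by linarith⟩⟩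
  have hfin2 : ∀ t ∈ Icc 0 t0, |ξ t - t| ≤ ε ∧ |ξ (-t) - (-t)| ≤ ε := by
    intro t ht
    obtain ⟨k1, k2⟩ := hfin t ht
    have e1 : ξ t = m t + δ t := by simp only [m, δ]; ring
    have e2 : ξ (-t) = m t - δ t := by simp only [m, δ]; ring
    rw [e1, e2]
    rw [abs_le] at k1 k2
    have hr : 2 * ρ = ε / 4 := by rw [hρ]; ring
    refine ⟨abs_le.mpr ⟨by linarith, by linarith⟩, abs_le.mpr ⟨by linarith, by linarith⟩⟩
  intro t ht
  rcases le_total 0 t with hh | hh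
  · exact (hfin2 t ⟨hh, ht.2⟩).1
  · have := (hfin2 (-t) ⟨by linarith, by linarith [ht.1]⟩).2
    rwa [neg_neg] at this

/-! ### Part 3: the truncated square and the Barta type inequality -/

def uu (η s : ℝ) : ℝ := max (s - η) 0 - max (-s - η) 0

def WW (η s : ℝ) : ℝ := max (s - η) 0 ^ 2 + max (-s - η) 0 ^ 2

lemma posSq_hasDerivAt (s : ℝ) :
    HasDerivAt (fun y : ℝ => max y 0 ^ 2) (2 * max s 0) s := by
  rcases lt_trichotomy s 0 with h | h | h
  · rw [max_eq_right h.le, mul_zero]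
    refine (hasDerivAt_const s (0 : ℝ)).congr_of_eventuallyEq ?_
    filter_upwards [gt_mem_nhds h] with y hy
    rw [max_eq_right hy.le]; norm_num
  · subst h
    simp only [max_self, mul_zero]
    have h1 : (fun y : ℝ => max y 0 ^ 2) =O[nhds 0] fun y => ‖y - 0‖ ^ 2 := by
      refine Asymptotics.IsBigO.of_bound 1 (Eventually.of_forall fun y => ?_)
      rw [sub_zero, one_mul, norm_pow, norm_pow, norm_norm]
      refine pow_le_pow_left₀ (norm_nonneg _) ?_ 2
      rw [Real.norm_eq_abs, Real.norm_eq_abs, abs_of_nonneg (le_max_right y 0)]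
      exact max_le (le_abs_self y) (abs_nonneg y)
    have h2 := h1.hasFDerivAt (𝕜 := ℝ) (by norm_num)
    have := h2.hasDerivAt
    simpa using this
  · rw [max_eq_left h.le]
    have h1 : HasDerivAt (fun y : ℝ => y ^ 2) (2 * s) s := by
      simpa using hasDerivAt_pow 2 s
    refine h1.congr_of_eventuallyEq ?_
    filter_upwards [lt_mem_nhds h] with y hy
    rw [max_eq_left hy.le]

lemma WW_hasDerivAt (η s : ℝ) : HasDerivAt (WW η) (2 * uu η s) s := by
  have h1 := (posSq_hasDerivAt (s - η)).comp s ((hasDerivAt_id s).sub_const η)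
  have h2 := (posSq_hasDerivAt (-s - η)).comp s ((hasDerivAt_neg s).sub_const η)
  have := h1.add h2
  refine this.congr_deriv ?_
  simp only [uu]; ring

lemma WW_eq_sq {η : ℝ} (hη : 0 ≤ η) (s : ℝ) : WW η s = uu η s ^ 2 := by
  simp only [WW, uu]
  rcases le_total s η with h | h
  · rw [max_eq_right (by linarith : s - η ≤ 0)]; ring
  · rw [max_eq_right (by linarith : -s - η ≤ 0)]; ring

lemma WW_nonneg (η s : ℝ) : 0 ≤ WW η s := by simp only [WW]; positivity

lemma WW_eq_zero {η s : ℝ} (h : |s| ≤ η) : WW η s = 0 := by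
  have := abs_le.mp h
  simp only [WW]
  rw [max_eq_right (by linarith : s - η ≤ 0), max_eq_right (by linarith : -s - η ≤ 0)]
  norm_num

lemma WW_le {η : ℝ} (hη : 0 ≤ η) (s : ℝ) : WW η s ≤ s ^ 2 := by
  simp only [WW]
  rcases le_total s η with h | h
  · rw [max_eq_right (by linarith : s - η ≤ 0)]
    rcases le_total (-s) η with h' | h'
    · rw [max_eq_right (by linarith : -s - η ≤ 0)]; nlinarith [sq_nonneg s]
    · rw [max_eq_left (by linarith : 0 ≤ -s - η)]; nlinarith
  · rw [max_eq_right (by linarith : -s - η ≤ 0), max_eq_left (by linarith : 0 ≤ s - η)]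
    nlinarith

lemma le_WW {η : ℝ} (hη : 0 ≤ η) (s : ℝ) : s ^ 2 - 2 * η * |s| ≤ WW η s := by
  simp only [WW]
  rcases le_total 0 s with h0 | h0
  · rw [abs_of_nonneg h0, max_eq_right (by linarith : -s - η ≤ 0)]
    rcases le_total s η with h | h
    · rw [max_eq_right (by linarith : s - η ≤ 0)]; nlinarith
    · rw [max_eq_left (by linarith : 0 ≤ s - η)]; nlinarith [sq_nonneg η]
  · rw [abs_of_nonpos h0, max_eq_right (by linarith : s - η ≤ 0)]
    rcases le_total (-s) η with h | h
    · rw [max_eq_right (by linarith : -s - η ≤ 0)]; nlinarith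
    · rw [max_eq_left (by linarith : 0 ≤ -s - η)]; nlinarith [sq_nonneg η]

lemma uu_cont (η : ℝ) : Continuous (uu η) := by unfold uu; fun_prop

lemma WW_cont (η : ℝ) : Continuous (WW η) := by unfold WW; fun_prop

lemma barta {l : ℝ} (hl : 0 ≤ l) {p θ v : ℝ → ℝ} (hp : Continuous p) (hv : ContDiff ℝ 1 v)
    {η : ℝ} (hη : 0 ≤ η) {α β : ℝ} (hαβ : α ≤ β) (hθc : Continuous θ)
    (der : ∀ x ∈ Icc α β, HasDerivAt θ (FF l (p x) (θ x)) x)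
    (hθ : ∀ x ∈ Icc α β, θ x ∈ Ioo (-(π / 2)) (π / 2))
    (hα : WW η (v α) = 0) (hβ : WW η (v β) = 0) :
    l * ∫ x in α..β, WW η (v x) ≤
      ∫ x in α..β, (deriv v x ^ 2 - p x * (2 * uu η (v x) * deriv v x)
        + p x ^ 2 * WW η (v x)) := by
  have hv1 : Continuous (deriv v) := hv.continuous_deriv le_rfl
  have hv0 : Continuous v := hv.continuous
  have hvd : ∀ x, HasDerivAt v (deriv v x) x :=
    fun x => ((hv.differentiable one_ne_zero) x).hasDerivAt
  have cu : Continuous fun x => uu η (v x) := (uu_cont η).comp hv0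
  have cw : Continuous fun x => WW η (v x) := (WW_cont η).comp hv0
  have hcos : ∀ x ∈ Icc α β, 0 < cos (θ x) := fun x hx => cos_pos_of_mem_Ioo (hθ x hx)
  set D : ℝ → ℝ := fun x => 2 * uu η (v x) * deriv v x * tan (θ x)
    + WW η (v x) * (1 / cos (θ x) ^ 2 * FF l (p x) (θ x)) with hD
  have hF : ∀ x ∈ uIcc α β, HasDerivAt (fun x => WW η (v x) * tan (θ x)) (D x) x := by
    intro x hx
    rw [uIcc_of_le hαβ] at hx
    have h1 := (WW_hasDerivAt η (v x)).comp x (hvd x)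
    have h2 := (Real.hasDerivAt_tan (hcos x hx).ne').comp x (der x hx)
    exact h1.mul h2
  have hFFc : Continuous fun x => FF l (p x) (θ x) := by
    unfold FF GG; fun_prop
  have hDc : ContinuousOn D (uIcc α β) := by
    rw [uIcc_of_le hαβ]
    have ht : ContinuousOn (fun x => tan (θ x)) (Icc α β) := fun x hx =>
      ((Real.continuousAt_tan.mpr (hcos x hx).ne').comp hθc.continuousAt).continuousWithinAt
    have hc : ContinuousOn (fun x => 1 / cos (θ x) ^ 2) (Icc α β) := by
      refine ContinuousOn.div continuousOn_const (by fun_prop) fun x hx => ?_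
      exact pow_ne_zero 2 (hcos x hx).ne'
    exact ((((continuous_const.mul cu).mul hv1).continuousOn).mul ht).add
      (cw.continuousOn.mul (hc.mul hFFc.continuousOn))
  have hDi : IntervalIntegrable D volume α β := hDc.intervalIntegrable
  have hInt := intervalIntegral.integral_eq_sub_of_hasDerivAt hF hDi
  rw [hα, hβ, zero_mul, zero_mul, sub_zero] at hInt
  have key : ∀ x ∈ Icc α β, l * WW η (v x) - l * D x ≤
      deriv v x ^ 2 - p x * (2 * uu η (v x) * deriv v x) + p x ^ 2 * WW η (v x) := by
    intro x hx
    have hc := hcos x hx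
    have hS : 1 + l * tan (θ x) ^ 2 - 2 * p x * tan (θ x) ≤
        1 / cos (θ x) ^ 2 * FF l (p x) (θ x) := by
      have : 1 + l * tan (θ x) ^ 2 - 2 * p x * tan (θ x)
          = 1 / cos (θ x) ^ 2 * GG l (p x) (θ x) := by
        rw [tan_eq_sin_div_cos]; unfold GG; field_simp
      rw [this]
      exact mul_le_mul_of_nonneg_left (le_max_left _ _) (by positivity)
    have hlW : 0 ≤ l * WW η (v x) := mul_nonneg hl (WW_nonneg _ _)
    have := mul_le_mul_of_nonneg_left hS hlW
    simp only [hD]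
    rw [WW_eq_sq hη] at *
    nlinarith [sq_nonneg (deriv v x - uu η (v x) * (p x - l * tan (θ x)))]
  have hi1 : IntervalIntegrable (fun x => l * WW η (v x)) volume α β :=
    (continuous_const.mul cw).intervalIntegrable _ _
  have hi2 : IntervalIntegrable (fun x => l * D x) volume α β := hDi.const_mul l
  have hi3 : IntervalIntegrable (fun x => deriv v x ^ 2 - p x * (2 * uu η (v x) * deriv v x)
      + p x ^ 2 * WW η (v x)) volume α β :=
    (by fun_prop : Continuous _).intervalIntegrable _ _
  have := intervalIntegral.integral_mono_on hαβ (hi1.sub hi2) hi3 key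
  rw [intervalIntegral.integral_sub hi1 hi2, intervalIntegral.integral_const_mul,
    intervalIntegral.integral_const_mul, hInt] at this
  linarith

/-! ### Part 4: mollification, Part 5: integration by parts -/

def mol (f : ℝ → ℝ) (ε x : ℝ) : ℝ := (∫ s in x..(x + ε), f s) / ε

lemma mol_cont {f : ℝ → ℝ} (hf : Monotone f) (ε : ℝ) : Continuous (mol f ε) := by
  have hi : ∀ a b, IntervalIntegrable f volume a b := fun a b => hf.intervalIntegrable
  have h := intervalIntegral.continuous_primitive hi 0
  have e : mol f ε = fun x => ((∫ s in (0 : ℝ)..(x + ε), f s) - ∫ s in (0 : ℝ)..x, f s) / ε := by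
    funext x
    rw [mol, intervalIntegral.integral_interval_sub_left (hi _ _) (hi _ _)]
  rw [e]
  exact ((h.comp (continuous_id.add continuous_const)).sub h).div_const ε

lemma mol_bounds {f : ℝ → ℝ} (hf : Monotone f) {ε : ℝ} (hε : 0 < ε) (x : ℝ) :
    f x ≤ mol f ε x ∧ mol f ε x ≤ f (x + ε) := by
  have hi : IntervalIntegrable f volume x (x + ε) := hf.intervalIntegrable
  have hx : x ≤ x + ε := by linarith
  have h1 := intervalIntegral.integral_mono_on hx (intervalIntegrable_const (c := f x)) hi
    (fun s hs => hf hs.1)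
  have h2 := intervalIntegral.integral_mono_on hx hi (intervalIntegrable_const (c := f (x + ε)))
    (fun s hs => hf hs.2)
  rw [intervalIntegral.integral_const, smul_eq_mul, add_sub_cancel_left] at h1 h2
  rw [mol]
  refine ⟨?_, ?_⟩
  · rw [le_div_iff₀ hε]; linarith
  · rw [div_le_iff₀ hε]; linarith

lemma mol_gap {f : ℝ → ℝ} (hf : Monotone f) {ε : ℝ} (hε : 0 < ε) {x y g : ℝ}
    (h : ∀ s ∈ Icc x (x + ε), g ≤ f (s + (y - x)) - f s) :
    g ≤ mol f ε y - mol f ε x := by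
  have hx : x ≤ x + ε := by linarith
  have e : ∫ s in y..(y + ε), f s = ∫ s in x..(x + ε), f (s + (y - x)) := by
    rw [intervalIntegral.integral_comp_add_right]
    congr 1 <;> ring
  have hi1 : IntervalIntegrable f volume x (x + ε) := hf.intervalIntegrable
  have hi2 : IntervalIntegrable (fun s => f (s + (y - x))) volume x (x + ε) := by
    have : Monotone fun s => f (s + (y - x)) := fun a b hab => hf (by linarith)
    exact this.intervalIntegrable
  have h1 := intervalIntegral.integral_mono_on hx (intervalIntegrable_const (c := g))
    (hi2.sub hi1) h
  rw [intervalIntegral.integral_const, smul_eq_mul, add_sub_cancel_left,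
    intervalIntegral.integral_sub hi2 hi1, ← e] at h1
  rw [mol, mol, ← sub_div, le_div_iff₀ hε]
  linarith

lemma mol_abs {f : ℝ → ℝ} (hf : Monotone f) {M : ℝ} (hM : ∀ x, |f x| ≤ M) {ε : ℝ} (hε : 0 < ε)
    (x : ℝ) : |mol f ε x| ≤ M := by
  have h1 := mol_bounds hf hε x
  have h2 := abs_le.mp (hM x)
  have h3 := abs_le.mp (hM (x + ε))
  exact abs_le.mpr ⟨by linarith, by linarith⟩

lemma mol_tendsto {f : ℝ → ℝ} (hf : Monotone f) {x : ℝ} (hx : ContinuousAt f x) {e : ℕ → ℝ}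
    (he0 : ∀ n, 0 < e n) (he : Tendsto e atTop (nhds 0)) :
    Tendsto (fun n => mol f (e n) x) atTop (nhds (f x)) := by
  refine tendsto_of_tendsto_of_tendsto_of_le_of_le (g := fun _ => f x)
    (h := fun n => f (x + e n)) tendsto_const_nhds ?_ (fun n => (mol_bounds hf (he0 n) x).1)
    (fun n => (mol_bounds hf (he0 n) x).2)
  have : Tendsto (fun n => x + e n) atTop (nhds x) := by
    simpa using tendsto_const_nhds.add he
  exact hx.tendsto.comp this

lemma mono_ae_cont {f : ℝ → ℝ} (hf : Monotone f) : ∀ᵐ x : ℝ, ContinuousAt f x := by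
  have := hf.countable_not_continuousAt.measure_zero volume
  exact this

lemma mol_integral_tendsto {f : ℝ → ℝ} (hf : Monotone f) {M : ℝ} (hM : ∀ x, |f x| ≤ M)
    {A B C : ℝ → ℝ} (hA : Continuous A) (hB : Continuous B) (hC : Continuous C) (α β : ℝ)
    {e : ℕ → ℝ} (he0 : ∀ n, 0 < e n) (he : Tendsto e atTop (nhds 0)) :
    Tendsto (fun n => ∫ x in α..β, (A x - mol f (e n) x * B x + mol f (e n) x ^ 2 * C x)) atTop
      (nhds (∫ x in α..β, (A x - f x * B x + f x ^ 2 * C x))) := by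
  have hM0 : 0 ≤ M := (abs_nonneg _).trans (hM 0)
  refine intervalIntegral.tendsto_integral_filter_of_dominated_convergence
    (fun x => |A x| + M * |B x| + M ^ 2 * |C x|) ?_ ?_ ?_ ?_
  · refine Eventually.of_forall fun n => Continuous.aestronglyMeasurable ?_
    have := mol_cont hf (e n)
    fun_prop
  · refine Eventually.of_forall fun n => Eventually.of_forall fun x _ => ?_
    have h1 := mol_abs hf hM (he0 n) x
    have h2 : mol f (e n) x ^ 2 ≤ M ^ 2 := by
      rw [← sq_abs]; exact pow_le_pow_left₀ (abs_nonneg _) h1 2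
    rw [Real.norm_eq_abs]
    calc |A x - mol f (e n) x * B x + mol f (e n) x ^ 2 * C x|
        ≤ |A x - mol f (e n) x * B x| + |mol f (e n) x ^ 2 * C x| := abs_add_le _ _
      _ ≤ |A x| + |mol f (e n) x * B x| + |mol f (e n) x ^ 2 * C x| := by
          gcongr; exact abs_sub _ _
      _ ≤ _ := by
          rw [abs_mul, abs_mul, abs_of_nonneg (sq_nonneg (mol f (e n) x))]
          gcongr
  · exact Continuous.intervalIntegrable (by fun_prop) _ _
  · filter_upwards [mono_ae_cont hf] with x hx _
    have h := mol_tendsto hf hx he0 he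
    exact ((h.mul_const _).const_sub _).add ((h.pow 2).mul_const _)

lemma stieltjes_parts {ν : Measure ℝ} {f W W' : ℝ → ℝ} {α β : ℝ} (hαβ : α ≤ β)
    (hf : Monotone f)
    (hν : ∀ x ∈ Icc α β, ν (Ioc x β) = ENNReal.ofReal (f β - f x))
    (hW : ∀ x, HasDerivAt W (W' x) x) (hW' : Continuous W') (hα : W α = 0) (hβ : W β = 0) :
    ∫ t in Ioc α β, W t ∂ν = - ∫ s in α..β, f s * W' s := by
  set μ := ν.restrict (Ioc α β) with hμ
  have : IsFiniteMeasure μ := ⟨by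
    rw [hμ, Measure.restrict_apply_univ, hν α ⟨le_rfl, hαβ⟩]; exact ENNReal.ofReal_lt_top⟩
  set m := (volume : Measure ℝ).restrict (Ioc α β) with hm
  have hWi : Integrable W' m := (hW'.intervalIntegrable α β).1
  set F : ℝ → ℝ → ℝ := fun s t => if s < t then W' s else 0 with hF
  have hFi : Integrable (Function.uncurry F) (m.prod μ) := by
    have h1 : Integrable (fun z : ℝ × ℝ => W' z.1) (m.prod μ) := hWi.comp_fst μ
    have h2 := h1.indicator (s := {z : ℝ × ℝ | z.1 < z.2})
      (measurableSet_lt measurable_fst measurable_snd)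
    refine h2.congr (Eventually.of_forall fun z => ?_)
    simp only [Function.uncurry, hF, indicator, mem_ofPred_eq]
  have hsw := integral_integral_swap hFi
  have hL : ∫ s, ∫ t, F s t ∂μ ∂m = ∫ s in α..β, W' s * (f β - f s) := by
    rw [intervalIntegral.integral_of_le hαβ]
    refine setIntegral_congr_fun measurableSet_Ioc fun s hs => ?_
    have e : (fun t => F s t) = (Ioi s).indicator (fun _ => W' s) := by
      funext t; simp only [hF, indicator, mem_Ioi]
    have e2 : Ioi s ∩ Ioc α β = Ioc s β := by
      ext t; simp only [mem_inter_iff, mem_Ioi, mem_Ioc]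
      constructor
      · rintro ⟨a, b, c⟩; exact ⟨a, c⟩
      · rintro ⟨a, b⟩; exact ⟨a, hs.1.trans a, b⟩
    show ∫ t, F s t ∂μ = _
    rw [e, integral_indicator_const _ measurableSet_Ioi, smul_eq_mul, hμ, measureReal_def,
      Measure.restrict_apply measurableSet_Ioi, e2, hν s ⟨hs.1.le, hs.2⟩,
      ENNReal.toReal_ofReal (sub_nonneg.mpr (hf hs.2)), mul_comm]
  have hR : ∫ t, ∫ s, F s t ∂m ∂μ = ∫ t in Ioc α β, W t ∂ν := by
    refine setIntegral_congr_fun measurableSet_Ioc fun t ht => ?_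
    have e : (fun s => F s t) = (Iio t).indicator W' := by
      funext s; simp only [hF, indicator, mem_Iio]
    have e2 : Iio t ∩ Ioc α β = Ioo α t := by
      ext s; simp only [mem_inter_iff, mem_Iio, mem_Ioc, mem_Ioo]
      constructor
      · rintro ⟨a, b, c⟩; exact ⟨b, a⟩
      · rintro ⟨a, b⟩; exact ⟨b, a, b.le.trans ht.2⟩
    show ∫ s, F s t ∂m = _
    rw [e, integral_indicator measurableSet_Iio, hm, Measure.restrict_restrict measurableSet_Iio,
      e2, ← integral_Ioc_eq_integral_Ioo, ← intervalIntegral.integral_of_le ht.1.le,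
      intervalIntegral.integral_eq_sub_of_hasDerivAt (fun x _ => hW x)
        (hW'.intervalIntegrable _ _), hα, sub_zero]
  rw [← hR, ← hsw, hL]
  have e : ∀ s, W' s * (f β - f s) = f β * W' s - f s * W' s := fun s => by ring
  simp_rw [e]
  have hfi : IntervalIntegrable f volume α β := hf.intervalIntegrable
  rw [intervalIntegral.integral_sub ((hW'.intervalIntegrable _ _).const_mul _)
    (hfi.mul_continuousOn hW'.continuousOn), intervalIntegral.integral_const_mul,
    intervalIntegral.integral_eq_sub_of_hasDerivAt (fun x _ => hW x)
        (hW'.intervalIntegrable _ _), hα, hβ]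
  ring

/-! ### Part 6: existence of configurations -/

lemma lint_eq {g : ℝ → ℝ} (hg : Continuous g) (h0 : ∀ x, 0 ≤ g x) :
    ∫⁻ x in Ioo (-(π / 2)) (π / 2), ENNReal.ofReal (g x) =
      ENNReal.ofReal (∫ x in (-(π / 2))..(π / 2), g x) := by
  have hpi := pi_pos
  rw [intervalIntegral.integral_of_le (by linarith), integral_Ioc_eq_integral_Ioo,
    ofReal_integral_eq_lintegral_ofReal]
  · exact ((hg.intervalIntegrable (-(π / 2)) (π / 2)).1).mono_set Ioo_subset_Ioc_self
  · exact Eventually.of_forall h0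

lemma PsiA.dom_meas (P : PsiA) : MeasurableSet P.dom := P.domConn.measurableSet

lemma PsiA.lint_qM (P : PsiA) {g : ℝ → ℝ≥0∞} (hg : Measurable g) :
    ∫⁻ x in Ioo (-(π / 2)) (π / 2), g x ∂P.qM =
      (∫⁻ x in P.dom, g x ∂P.nu) + (∫⁻ x in P.dom, ENNReal.ofReal (P.psi x ^ 2) * g x) +
      ∞ * ∫⁻ x in Ioo (-(π / 2)) (π / 2) \ P.dom, g x := by
  have hs : MeasurableSet (Ioo (-(π / 2)) (π / 2)) := measurableSet_Ioo
  have hd := P.dom_meas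
  have hsub := P.domSub
  have hpm : AEMeasurable (fun x => ENNReal.ofReal (P.psi x ^ 2)) (volume.restrict P.dom) :=
    ((aemeasurable_restrict_of_monotoneOn hd P.mono).pow_const 2).ennreal_ofReal
  rw [PsiA.qM, Measure.restrict_add, Measure.restrict_add, lintegral_add_measure,
    lintegral_add_measure, Measure.restrict_restrict hs, Measure.restrict_smul,
    lintegral_smul_measure, Measure.restrict_restrict hs, inter_eq_self_of_subset_right hsub,
    inter_eq_self_of_subset_right sdiff_subset, restrict_withDensity hs,
    Measure.restrict_restrict hs, inter_eq_self_of_subset_right hsub,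
    lintegral_withDensity_eq_lintegral_mul₀ hpm hg.aemeasurable, smul_eq_mul]
  rfl

lemma PsiA.supp_sub (P : PsiA) {v : ℝ → ℝ} (hv : Continuous v)
    (hv0 : ∀ x ∉ Ioo (-(π / 2)) (π / 2), v x = 0)
    (h : ∫⁻ x in Ioo (-(π / 2)) (π / 2) \ P.dom, ENNReal.ofReal (v x ^ 2) = 0) :
    {x | v x ≠ 0} ⊆ P.dom := by
  have hd := P.dom_meas
  have hm : Measurable fun x => ENNReal.ofReal (v x ^ 2) := (hv.measurable.pow_const 2).ennreal_ofReal
  have hae := (lintegral_eq_zero_iff hm).mp h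
  rw [Filter.EventuallyEq, ae_restrict_iff' (measurableSet_Ioo.diff hd)] at hae
  have hnull : volume ({x | v x ≠ 0} \ P.dom) = 0 := by
    refine measure_mono_null ?_ hae
    rintro x ⟨hx, hxd⟩ hc
    have hxI : x ∈ Ioo (-(π / 2)) (π / 2) := by
      by_contra hn; exact hx (hv0 x hn)
    have := hc ⟨hxI, hxd⟩
    simp only [Pi.zero_apply, ENNReal.ofReal_eq_zero] at this
    exact hx (pow_eq_zero_iff two_ne_zero |>.mp (le_antisymm this (sq_nonneg _)))
  have hU : IsOpen {x | v x ≠ 0} := isOpen_ne_fun hv continuous_const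
  have key : ∀ a b, a < b → Ioo a b ⊆ {x | v x ≠ 0} → ∃ z ∈ Ioo a b, z ∈ P.dom := by
    intro a b hab hsub
    by_contra hcon
    push Not at hcon
    have : volume (Ioo a b) = 0 :=
      measure_mono_null (fun z (hz : z ∈ Ioo a b) =>
        show z ∈ {x | v x ≠ 0} \ P.dom from ⟨hsub hz, hcon z hz⟩) hnull
    rw [Real.volume_Ioo, ENNReal.ofReal_eq_zero] at this
    linarith
  intro x hx
  obtain ⟨r, hr, hb⟩ := Metric.isOpen_iff.mp hU x hx
  rw [Real.ball_eq_Ioo] at hb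
  obtain ⟨z1, hz1, hd1⟩ := key (x - r) x (by linarith)
    ((Ioo_subset_Ioo_right (by linarith)).trans hb)
  obtain ⟨z2, hz2, hd2⟩ := key x (x + r) (by linarith)
    ((Ioo_subset_Ioo_left (by linarith)).trans hb)
  exact P.domConn.out hd1 hd2 ⟨hz1.2.le, hz2.1.le⟩

lemma encl {U K : Set ℝ} (hU : IsOpen U) (hK : IsCompact K) (hne : K.Nonempty) (hKU : K ⊆ U) :
    ∃ α α' β β0, α < α' ∧ α' < β ∧ β < β0 ∧ α ∈ U ∧ β0 ∈ U ∧ K ⊆ Ioo α' β := by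
  have h1 := hK.sInf_mem hne
  have h2 := hK.sSup_mem hne
  obtain ⟨r, hr, hb⟩ := Metric.isOpen_iff.mp hU _ (hKU h1)
  obtain ⟨r', hr', hb'⟩ := Metric.isOpen_iff.mp hU _ (hKU h2)
  rw [Real.ball_eq_Ioo] at hb hb'
  have hle : sInf K ≤ sSup K := csInf_le hK.bddBelow h2
  refine ⟨sInf K - r / 2, sInf K - r / 4, sSup K + r' / 4, sSup K + r' / 2, by linarith,
    by linarith, by linarith, hb ⟨by linarith, by linarith⟩, hb' ⟨by linarith, by linarith⟩, ?_⟩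
  intro x hx
  have := csInf_le hK.bddBelow hx
  have := le_csSup hK.bddAbove hx
  exact ⟨by linarith, by linarith⟩

/-- The data extracted from a good test function. -/
def Good (P : PsiA) (l ε0 : ℝ) : Prop :=
  ∃ (a b ε : ℝ) (p θ ξ : ℝ → ℝ), 0 < ε ∧ ε < ε0 ∧ a < b ∧ a ∈ P.dom ∧ b + ε ∈ P.dom ∧
    Cfg l p θ ξ a b ∧ Continuous p ∧ Continuous θ ∧ StrictMono θ ∧
    ∀ s ∈ Icc a b, P.psi s ≤ p s ∧ p s ≤ P.psi (s + ε)

lemma good_of_energy (P : PsiA) {l : ℝ} (hl : 0 ≤ l) {v : ℝ → ℝ} (hv : ContDiff ℝ 1 v) {η : ℝ}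
    (hη : 0 ≤ η) {α α' β β0 : ℝ} (h1 : α < α') (h2 : α' < β) (h3 : β < β0) (hα : α ∈ P.dom)
    (hβ0 : β0 ∈ P.dom) (hWα : WW η (v α') = 0) (hWβ : WW η (v β) = 0)
    (hE : (∫ x in α'..β, deriv v x ^ 2) + (∫ t in Ioc α' β, WW η (v t) ∂P.nu)
      + (∫ x in α'..β, P.psi x ^ 2 * WW η (v x)) < l * ∫ x in α'..β, WW η (v x))
    {ε0 : ℝ} (hε0 : 0 < ε0) : Good P l ε0 := by
  have hv1 : Continuous (deriv v) := hv.continuous_deriv le_rfl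
  have hv0 : Continuous v := hv.continuous
  have hvd : ∀ x, HasDerivAt v (deriv v x) x :=
    fun x => ((hv.differentiable one_ne_zero) x).hasDerivAt
  have cu : Continuous fun x => uu η (v x) := (uu_cont η).comp hv0
  have cw : Continuous fun x => WW η (v x) := (WW_cont η).comp hv0
  have hαβ0 : α ≤ β0 := by linarith
  have hdom : Icc α β0 ⊆ P.dom := P.domConn.out hα hβ0
  set f : ℝ → ℝ := fun x => P.psi (max α (min β0 x)) with hf
  have hpr : ∀ x, max α (min β0 x) ∈ Icc α β0 := fun x =>
    ⟨le_max_left _ _, max_le hαβ0 (min_le_left _ _)⟩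
  have hfm : Monotone f := fun x y hxy =>
    P.mono (hdom (hpr x)) (hdom (hpr y)) (max_le_max le_rfl (min_le_min le_rfl hxy))
  have hfe : ∀ x ∈ Icc α β0, f x = P.psi x := by
    intro x hx
    simp only [hf]
    rw [min_eq_right hx.2, max_eq_right hx.1]
  have hfM : ∀ x, |f x| ≤ max |P.psi α| |P.psi β0| := by
    intro x
    have k1 := P.mono hα (hdom (hpr x)) (hpr x).1
    have k2 := P.mono (hdom (hpr x)) hβ0 (hpr x).2
    exact abs_le_max_abs_abs k1 k2
  set M := max |P.psi α| |P.psi β0|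
  have hst := stieltjes_parts (ν := P.nu) (f := f) (W := fun x => WW η (v x))
    (W' := fun x => 2 * uu η (v x) * deriv v x) h2.le hfm
    (fun x hx => by
      rw [hfe x ⟨by linarith [hx.1], by linarith [hx.2]⟩, hfe β ⟨by linarith, h3.le⟩]
      exact P.nu_eq (hdom ⟨by linarith [hx.1], by linarith [hx.2]⟩)
        (hdom ⟨by linarith, h3.le⟩) hx.2)
    (fun x => (WW_hasDerivAt η (v x)).comp x (hvd x)) (by fun_prop) hWα hWβ
  have hfi : IntervalIntegrable f volume α' β := hfm.intervalIntegrable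
  have hf2 : IntervalIntegrable (fun x => f x ^ 2) volume α' β := by
    refine IntervalIntegrable.mono_fun' (g := fun _ => M ^ 2) intervalIntegrable_const
      (hfm.measurable.pow_const 2).aestronglyMeasurable (Eventually.of_forall fun x => ?_)
    show ‖f x ^ 2‖ ≤ M ^ 2
    rw [norm_pow]
    exact pow_le_pow_left₀ (norm_nonneg _) (hfM x) 2
  have hpsi2 : ∫ x in α'..β, P.psi x ^ 2 * WW η (v x) = ∫ x in α'..β, f x ^ 2 * WW η (v x) := by
    refine intervalIntegral.integral_congr fun x hx => ?_
    rw [uIcc_of_le h2.le] at hx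
    show _ = f x ^ 2 * _
    rw [hfe x ⟨by linarith [hx.1], by linarith [hx.2]⟩]
  have hE2 : ∫ x in α'..β, (deriv v x ^ 2 - f x * (2 * uu η (v x) * deriv v x)
        + f x ^ 2 * WW η (v x)) < l * ∫ x in α'..β, WW η (v x) := by
    have i1 : IntervalIntegrable (fun x => deriv v x ^ 2) volume α' β :=
      (hv1.pow 2).intervalIntegrable _ _
    have i2 : IntervalIntegrable (fun x => f x * (2 * uu η (v x) * deriv v x)) volume α' β :=
      hfi.mul_continuousOn (by fun_prop)
    have i3 : IntervalIntegrable (fun x => f x ^ 2 * WW η (v x)) volume α' β :=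
      hf2.mul_continuousOn cw.continuousOn
    rw [intervalIntegral.integral_add (i1.sub i2) i3, intervalIntegral.integral_sub i1 i2]
    rw [hst, hpsi2] at hE
    linarith
  have he0 : ∀ n : ℕ, 0 < 1 / ((n : ℝ) + 1) := fun n => Nat.one_div_pos_of_nat
  have he : Tendsto (fun n : ℕ => 1 / ((n : ℝ) + 1)) atTop (nhds 0) :=
    tendsto_one_div_add_atTop_nhds_zero_nat
  have hT := mol_integral_tendsto hfm hfM (A := fun x => deriv v x ^ 2)
    (B := fun x => 2 * uu η (v x) * deriv v x) (C := fun x => WW η (v x)) (by fun_prop)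
    (by fun_prop) cw α' β he0 he
  obtain ⟨n, hn1, hn2⟩ := ((hT.eventually (gt_mem_nhds hE2)).and
    (he.eventually (gt_mem_nhds (lt_min hε0 (sub_pos.mpr h3))))).exists
  set ε := 1 / ((n : ℝ) + 1)
  have hε : 0 < ε := he0 n
  have hεε : ε < ε0 := hn2.trans_le (min_le_left _ _)
  have hεβ : ε < β0 - β := hn2.trans_le (min_le_right _ _)
  set p := mol f ε with hp
  have hpc : Continuous p := mol_cont hfm ε
  obtain ⟨θ, ξ, t1, t2, t3, t4, t5, t6, t7, t8⟩ :=
    pruefer_exists l hpc (fun x => mol_abs hfm hfM hε x) (h1.trans h2)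
  have hθβ : π / 2 ≤ θ β := by
    by_contra hcon
    push Not at hcon
    have := barta hl hpc hv hη h2.le t4
      (fun x hx => t2 x ⟨h1.le.trans hx.1, hx.2⟩)
      (fun x hx => ⟨by rw [← t1]; exact t3 (h1.trans_le hx.1),
        (t3.monotone hx.2).trans_lt hcon⟩) hWα hWβ
    linarith
  have hb1 : ξ (π / 2) ≤ β := by
    rw [← t3.le_iff_le, t8]; exact hθβ
  have hb2 : α < ξ (π / 2) := by
    rw [← t3.lt_iff_lt, t8, t1]; linarith [pi_pos]
  set b := ξ (π / 2) with hb
  have hbnd : ∀ s ∈ Icc α b, P.psi s ≤ p s ∧ p s ≤ P.psi (s + ε) := by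
    intro s hs
    have := mol_bounds hfm hε s
    rwa [hfe s ⟨hs.1, by linarith [hs.2]⟩,
      hfe (s + ε) ⟨by linarith [hs.1], by linarith [hs.2]⟩] at this
  refine ⟨α, b, ε, p, θ, ξ, hε, hεε, hb2, hα, hdom ⟨by linarith, by linarith⟩, ?_, hpc, t4, t3,
    hbnd⟩
  refine ⟨(P.domSub hα).1, ?_, t1, t8 _, fun x hx => t2 x ⟨hx.1, hx.2.trans hb1⟩, ?_, t5, t6, t7,
    t8⟩
  · have := (P.domSub hβ0).2
    linarith
  · intro x hx y hy hxy
    refine mol_gap hfm hε fun s hs => ?_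
    have k1 : s ∈ Icc α β0 := ⟨by linarith [hx.1, hs.1], by linarith [hx.2, hs.2]⟩
    have k2 : s + (y - x) ∈ Icc α β0 :=
      ⟨by linarith [hx.1, hs.1], by linarith [hy.2, hs.2]⟩
    rw [hfe _ k1, hfe _ k2]
    have := P.gap (hdom k1) (hdom k2) (by linarith)
    rwa [add_sub_cancel_left] at this

lemma good_of_rq (P : PsiA) {l : ℝ} (hl : 0 ≤ l) {v : ℝ → ℝ}
    (hv : TestFun (-(π / 2)) (π / 2) v)
    (hD : (∫⁻ x in Ioo (-(π / 2)) (π / 2), ENNReal.ofReal ((v x) ^ 2)) ≠ 0)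
    (hR : dirRQ (-(π / 2)) (π / 2) P.qM v < ENNReal.ofReal l) {ε0 : ℝ} (hε0 : 0 < ε0) :
    Good P l ε0 := by
  obtain ⟨hvC, hvz⟩ := hv
  have hpi := pi_pos
  have hv1 : Continuous (deriv v) := hvC.continuous_deriv le_rfl
  have hv0 : Continuous v := hvC.continuous
  have hm : Measurable fun x => ENNReal.ofReal (v x ^ 2) :=
    (hv0.measurable.pow_const 2).ennreal_ofReal
  set V := ∫ x in (-(π / 2))..(π / 2), v x ^ 2 with hV
  set n1 := ∫ x in (-(π / 2))..(π / 2), deriv v x ^ 2 with hn1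
  have hV0 : 0 ≤ V := intervalIntegral.integral_nonneg (by linarith) fun x _ => sq_nonneg _
  have hn10 : 0 ≤ n1 := intervalIntegral.integral_nonneg (by linarith) fun x _ => sq_nonneg _
  rw [dirRQ, lint_eq (g := fun x => deriv v x ^ 2) (hv1.pow 2) (fun x => sq_nonneg _), P.lint_qM hm] at hR
  rw [lint_eq (g := fun x => v x ^ 2) (hv0.pow 2) (fun x => sq_nonneg _)] at hR hD
  set A := ∫⁻ x in P.dom, ENNReal.ofReal (v x ^ 2) ∂P.nu with hA
  set B := ∫⁻ x in P.dom, ENNReal.ofReal (P.psi x ^ 2) * ENNReal.ofReal (v x ^ 2) with hB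
  set C := ∫⁻ x in Ioo (-(π / 2)) (π / 2) \ P.dom, ENNReal.ofReal (v x ^ 2) with hC
  rw [ENNReal.div_lt_iff (Or.inl hD) (Or.inl ENNReal.ofReal_ne_top),
    ← ENNReal.ofReal_mul hl] at hR
  have hfin : ENNReal.ofReal n1 + (A + B + ∞ * C) ≠ ∞ := (hR.trans ENNReal.ofReal_lt_top).ne
  have hC0 : C = 0 := by
    by_contra hne
    apply hfin
    rw [ENNReal.top_mul hne]; simp
  have hAt : A ≠ ∞ := by
    intro h; apply hfin; rw [h]; simp
  have hBt : B ≠ ∞ := by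
    intro h; apply hfin; rw [h]; simp
  have hreal : n1 + (A.toReal + B.toReal) < l * V := by
    rw [hC0, mul_zero, add_zero, ← ENNReal.ofReal_toReal hAt, ← ENNReal.ofReal_toReal hBt,
      ← ENNReal.ofReal_add ENNReal.toReal_nonneg ENNReal.toReal_nonneg,
      ← ENNReal.ofReal_add hn10 (by positivity)] at hR
    exact (ENNReal.ofReal_lt_ofReal_iff_of_nonneg (by positivity)).mp hR
  have hU : {x | v x ≠ 0} ⊆ P.dom := P.supp_sub hv0 hvz hC0
  -- choice of the truncation level
  set Q := ∫ x in (-(π / 2))..(π / 2), |v x| with hQ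
  have hQ0 : 0 ≤ Q := intervalIntegral.integral_nonneg (by linarith) fun x _ => abs_nonneg _
  set d := l * V - (n1 + (A.toReal + B.toReal)) with hd
  have hd0 : 0 < d := sub_pos.mpr hreal
  set η := d / (2 * l * Q + 1) with hη
  have hlQ : 0 < 2 * l * Q + 1 := by positivity
  have hη0 : 0 < η := div_pos hd0 hlQ
  have hηd : η * (2 * l * Q) < d := by
    have : η * (2 * l * Q + 1) = d := div_mul_cancel₀ d hlQ.ne'
    linarith
  have cw : Continuous fun x => WW η (v x) := (WW_cont η).comp hv0
  have hWint : V - 2 * η * Q ≤ ∫ x in (-(π / 2))..(π / 2), WW η (v x) := by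
    have i1 : IntervalIntegrable (fun x => v x ^ 2) volume (-(π / 2)) (π / 2) :=
      (hv0.pow 2).intervalIntegrable _ _
    have i2 : IntervalIntegrable (fun x => 2 * η * |v x|) volume (-(π / 2)) (π / 2) :=
      Continuous.intervalIntegrable (by fun_prop) _ _
    have := intervalIntegral.integral_mono_on (by linarith : -(π / 2) ≤ π / 2) (i1.sub i2)
      (cw.intervalIntegrable _ _) (fun x _ => le_WW hη0.le (v x))
    rwa [intervalIntegral.integral_sub i1 i2, intervalIntegral.integral_const_mul] at this
  have hE1 : n1 + (A.toReal + B.toReal) < l * ∫ x in (-(π / 2))..(π / 2), WW η (v x) := by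
    have := mul_le_mul_of_nonneg_left hWint hl
    nlinarith
  -- the enclosing interval
  set K := {x | η ≤ |v x|} with hK
  have hKI : K ⊆ Ioo (-(π / 2)) (π / 2) := by
    intro x hx
    by_contra hn
    have hx' : η ≤ |v x| := hx
    rw [hvz x hn, abs_zero] at hx'
    linarith
  have hKc : IsCompact K := by
    refine Metric.isCompact_of_isClosed_isBounded (isClosed_le continuous_const hv0.abs) ?_
    exact (Metric.isBounded_Ioo _ _).subset hKI
  have hKne : K.Nonempty := by
    by_contra hne
    rw [Set.not_nonempty_iff_eq_empty] at hne
    have : ∀ x, WW η (v x) = 0 := fun x => by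
      apply WW_eq_zero
      by_contra hcon
      push Not at hcon
      have : x ∈ K := hcon.le
      rw [hne] at this
      exact this
    simp only [this, intervalIntegral.integral_zero, mul_zero] at hE1
    have h1 := ENNReal.toReal_nonneg (a := A)
    have h2 := ENNReal.toReal_nonneg (a := B)
    linarith
  have hKU : K ⊆ {x | v x ≠ 0} := by
    intro x hx h0
    have hx' : η ≤ |v x| := hx
    rw [h0, abs_zero] at hx'
    linarith
  obtain ⟨α, α', β, β0, h1, h2, h3, hα, hβ0, hKs⟩ :=
    encl (isOpen_ne_fun hv0 continuous_const) hKc hKne hKU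
  have hW0 : ∀ x ∉ Ioo α' β, WW η (v x) = 0 := by
    intro x hx
    apply WW_eq_zero
    by_contra hcon
    push Not at hcon
    exact hx (hKs hcon.le)
  have hdom : Icc α β0 ⊆ P.dom := P.domConn.out (hU hα) (hU hβ0)
  have hαI := (P.domSub (hU hα)).1
  have hβI := (P.domSub (hU hβ0)).2
  have hIoc : Ioc α' β ⊆ P.dom := fun x hx => hdom ⟨by linarith [hx.1], by linarith [hx.2]⟩
  have hWeq : ∫ x in α'..β, WW η (v x) = ∫ x in (-(π / 2))..(π / 2), WW η (v x) := by
    rw [intervalIntegral.integral_eq_integral_of_support_subset,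
      intervalIntegral.integral_eq_integral_of_support_subset]
    · intro x hx
      by_contra hn
      exact hx (hW0 x fun hx' => hn ⟨by linarith [hx'.1], by linarith [hx'.2]⟩)
    · intro x hx
      by_contra hn
      exact hx (hW0 x fun hx' => hn ⟨hx'.1, hx'.2.le⟩)
  have e1 : ∫ x in α'..β, deriv v x ^ 2 ≤ n1 := by
    refine intervalIntegral.integral_mono_interval (by linarith) h2.le (by linarith)
      (Eventually.of_forall fun x => sq_nonneg _) ((hv1.pow 2).intervalIntegrable _ _)
  have e2 : ∫ t in Ioc α' β, WW η (v t) ∂P.nu ≤ A.toReal := by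
    rw [integral_eq_lintegral_of_nonneg_ae (Eventually.of_forall fun x => WW_nonneg _ _)
      cw.measurable.aestronglyMeasurable]
    refine ENNReal.toReal_mono hAt ?_
    refine (lintegral_mono fun x => ENNReal.ofReal_le_ofReal (WW_le hη0.le (v x))).trans ?_
    exact lintegral_mono_set hIoc
  have e3 : ∫ x in α'..β, P.psi x ^ 2 * WW η (v x) ≤ B.toReal := by
    have hpm : AEMeasurable P.psi (volume.restrict (Ioc α' β)) :=
      aemeasurable_restrict_of_monotoneOn measurableSet_Ioc (P.mono.mono hIoc)
    rw [intervalIntegral.integral_of_le h2.le, integral_eq_lintegral_of_nonneg_ae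
      (Eventually.of_forall fun x => mul_nonneg (sq_nonneg _) (WW_nonneg _ _))
      ((hpm.pow_const 2).mul cw.measurable.aemeasurable).aestronglyMeasurable]
    refine ENNReal.toReal_mono hBt ?_
    refine le_trans (lintegral_mono fun x => ?_) (lintegral_mono_set hIoc)
    show ENNReal.ofReal (P.psi x ^ 2 * WW η (v x)) ≤ _
    rw [ENNReal.ofReal_mul (sq_nonneg _)]
    exact mul_le_mul_right (ENNReal.ofReal_le_ofReal (WW_le hη0.le (v x))) _
  refine good_of_energy P hl hvC hη0.le h1 h2 h3 (hU hα) (hU hβ0)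
    (hW0 _ fun h => lt_irrefl _ h.1) (hW0 _ fun h => lt_irrefl _ h.2) ?_ hε0
  rw [hWeq]
  linarith

/-! ### Part 7: rigidity -/

lemma lower_bound (P : PsiA) : 3 ≤ lam1 (-(π / 2)) (π / 2) P.qM := by
  refine le_iInf₂ fun v hv => ?_
  by_contra hcon
  push Not at hcon
  have h3 : (3 : ℝ≥0∞) = ENNReal.ofReal 3 := by norm_num
  rw [h3] at hcon
  obtain ⟨a, b, ε, p, θ, ξ, -, -, -, -, -, h, -⟩ :=
    good_of_rq P (by norm_num) hv.1 hv.2 hcon one_pos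
  exact h.false_of_three

lemma all_good (P : PsiA) (h : lam1 (-(π / 2)) (π / 2) P.qM = 3) {l : ℝ} (hl : 3 < l) {ε0 : ℝ}
    (hε0 : 0 < ε0) : Good P l ε0 := by
  have h3 : (3 : ℝ≥0∞) = ENNReal.ofReal 3 := by norm_num
  have : lam1 (-(π / 2)) (π / 2) P.qM < ENNReal.ofReal l := by
    rw [h, h3]; exact (ENNReal.ofReal_lt_ofReal_iff (by linarith)).mpr hl
  rw [lam1] at this
  obtain ⟨v, this⟩ := iInf_lt_iff.mp this
  obtain ⟨hv, hlt⟩ := iInf_lt_iff.mp this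
  exact good_of_rq P (by linarith) hv.1 hv.2 hlt hε0

lemma FF_abs_le {l p t M : ℝ} (hM : 0 ≤ M) (hp : |p| ≤ M) :
    |FF l p t| ≤ 1 + |l| + 2 * M := by
  have h1 := GG_abs_le (l := l) (t := t) hp
  rw [abs_of_pos (FF_pos l p t), FF]
  have := abs_nonneg l
  exact max_le ((le_abs_self _).trans h1) (by linarith)

lemma FF_tendsto {l p t : ℕ → ℝ} {l0 p0 t0 : ℝ} (hl : Tendsto l atTop (nhds l0))
    (hp : Tendsto p atTop (nhds p0)) (ht : Tendsto t atTop (nhds t0)) :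
    Tendsto (fun n => FF (l n) (p n) (t n)) atTop (nhds (FF l0 p0 t0)) := by
  have hFc : Continuous fun q : ℝ × ℝ × ℝ => FF q.1 q.2.1 q.2.2 := by
    unfold FF GG; fun_prop
  have h1 := hl.prodMk_nhds (hp.prodMk_nhds ht)
  have h2 := (hFc.tendsto (l0, p0, t0)).comp h1
  exact h2

lemma FF_meas {f : ℝ → ℝ} (hf : Measurable f) : Measurable fun y => FF 3 (f y) y := by
  unfold FF GG; fun_prop

lemma FF_contAt {f : ℝ → ℝ} {s : ℝ} (hf : ContinuousAt f s) :
    ContinuousAt (fun y => FF 3 (f y) y) s := by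
  unfold FF GG; fun_prop

set_option maxHeartbeats 2000000 in
lemma psi_eq_tan (P : PsiA) (h : ∀ l, 3 < l → ∀ ε0, 0 < ε0 → Good P l ε0) :
    (∀ x ∈ Ioo (-(π / 2)) (π / 2), x ∈ P.dom) ∧
    ∀ x ∈ Ioo (-(π / 2)) (π / 2), P.psi x = tan x := by
  have he0 : ∀ n : ℕ, 0 < 1 / ((n : ℝ) + 1) := fun n => Nat.one_div_pos_of_nat
  have he : Tendsto (fun n : ℕ => 1 / ((n : ℝ) + 1)) atTop (nhds 0) :=
    tendsto_one_div_add_atTop_nhds_zero_nat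
  have hg : ∀ n : ℕ, Good P (3 + 1 / ((n : ℝ) + 1)) (1 / ((n : ℝ) + 1)) :=
    fun n => h _ (by linarith [he0 n]) _ (he0 n)
  choose a b ε p θ ξ hε hεlt hab ha hb hc hpc hθc hθm hψ using hg
  have hεlim : Tendsto ε atTop (nhds 0) :=
    tendsto_of_tendsto_of_tendsto_of_le_of_le tendsto_const_nhds he (fun n => (hε n).le)
      (fun n => (hεlt n).le)
  have close : ∀ x ∈ Ioo (-(π / 2)) (π / 2), ∀ r > 0, ∀ᶠ n in atTop,
      x ∈ Icc (a n) (b n) ∧ |θ n x - x| ≤ r := by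
    intro x hx r hr
    have hxa : |x| < π / 2 := abs_lt.mpr hx
    set r' := min r ((π / 2 - |x|) / 2) with hr'
    have hr0 : 0 < r' := lt_min hr (by linarith)
    have hr1 : r' ≤ r := min_le_left _ _
    have hr2 : |x| + r' < π / 2 := by
      have : r' ≤ (π / 2 - |x|) / 2 := min_le_right _ _
      linarith
    obtain ⟨μ, hμ, hcl⟩ := cfg_close (t0 := |x| + r') (ε := r' / 2)
      (by have := abs_nonneg x; linarith) hr2 (by linarith)
    filter_upwards [he.eventually (gt_mem_nhds hμ)] with n hn
    have hcl' := hcl _ (by linarith [he0 n]) (by linarith) _ _ _ _ _ (hc n)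
    have x1 := le_abs_self x
    have x2 := neg_abs_le x
    have c1 := hcl' (x + r') ⟨by linarith, by linarith⟩
    have c2 := hcl' (x - r') ⟨by linarith, by linarith⟩
    rw [abs_le] at c1 c2
    have m1 := (hc n).ξ_mem (t := x + r') ⟨by linarith, by linarith⟩
    have m2 := (hc n).ξ_mem (t := x - r') ⟨by linarith, by linarith⟩
    have g1 : θ n x < x + r' := by
      rw [← (hc n).θξ (x + r')]; exact hθm n (by linarith)
    have g2 : x - r' < θ n x := by
      rw [← (hc n).θξ (x - r')]; exact hθm n (by linarith)
    exact ⟨⟨by linarith [m2.1], by linarith [m1.2]⟩, abs_le.mpr ⟨by linarith, by linarith⟩⟩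
  have hdom : ∀ x ∈ Ioo (-(π / 2)) (π / 2), x ∈ P.dom := by
    intro x hx
    obtain ⟨n, hn, -⟩ := (close x hx 1 one_pos).exists
    exact P.domConn.out (ha n) (hb n) ⟨hn.1, by linarith [hn.2, hε n]⟩
  have hθlim : ∀ x ∈ Ioo (-(π / 2)) (π / 2), Tendsto (fun n => θ n x) atTop (nhds x) := by
    intro x hx
    rw [Metric.tendsto_nhds]
    intro r hr
    filter_upwards [close x hx (r / 2) (by linarith)] with n hn
    rw [Real.dist_eq]; linarith [hn.2]
  refine ⟨hdom, fun z hz => ?_⟩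
  obtain ⟨x1, hx1, hx1z⟩ := exists_between hz.1
  obtain ⟨x3, hzx3, hx3⟩ := exists_between hz.2
  have hI : Icc x1 x3 ⊆ Ioo (-(π / 2)) (π / 2) := fun x hx => ⟨by linarith [hx.1], by linarith [hx.2]⟩
  have hx13 : x1 ≤ x3 := by linarith
  set f : ℝ → ℝ := fun x => P.psi (max x1 (min x3 x)) with hf
  have hpr : ∀ x, max x1 (min x3 x) ∈ Icc x1 x3 := fun x =>
    ⟨le_max_left _ _, max_le hx13 (min_le_left _ _)⟩
  have hfm : Monotone f := fun x y hxy =>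
    P.mono (hdom _ (hI (hpr x))) (hdom _ (hI (hpr y))) (max_le_max le_rfl (min_le_min le_rfl hxy))
  have hfe : ∀ x ∈ Icc x1 x3, f x = P.psi x := by
    intro x hx
    simp only [hf]
    rw [min_eq_right hx.2, max_eq_right hx.1]
  have hfM : ∀ x, |f x| ≤ max |P.psi x1| |P.psi x3| := by
    intro x
    have k1 := P.mono (hdom _ (hI ⟨le_rfl, hx13⟩)) (hdom _ (hI (hpr x))) (hpr x).1
    have k2 := P.mono (hdom _ (hI (hpr x))) (hdom _ (hI ⟨hx13, le_rfl⟩)) (hpr x).2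
    exact abs_le_max_abs_abs k1 k2
  set M := max |P.psi x1| |P.psi x3| with hM
  have hM0 : 0 ≤ M := (abs_nonneg _).trans (hfM 0)
  -- the eventual facts on a subinterval
  have ev : ∀ x ∈ Ioo x1 x3, ∀ᶠ n in atTop, (Icc x1 x ⊆ Icc (a n) (b n)) ∧
      ∀ s ∈ Icc x1 x, f s ≤ p n s ∧ p n s ≤ f (s + ε n) := by
    intro x hx
    filter_upwards [close x1 (hI ⟨le_rfl, hx13⟩) 1 one_pos,
      close x (hI ⟨hx.1.le, hx.2.le⟩) 1 one_pos,
      hεlim.eventually (gt_mem_nhds (sub_pos.mpr hx.2))] with n h1 h2 h3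
    have hsub : Icc x1 x ⊆ Icc (a n) (b n) := Icc_subset_Icc h1.1.1 h2.1.2
    refine ⟨hsub, fun s hs => ?_⟩
    have := hψ n s (hsub hs)
    rwa [← hfe s ⟨hs.1, by linarith [hs.2, hx.2]⟩,
      ← hfe (s + ε n) ⟨by linarith [hs.1, hε n], by linarith [hs.2]⟩] at this
  have hInt : ∀ x ∈ Ioo x1 x3, ∫ s in x1..x, FF 3 (f s) s = x - x1 := by
    intro x hx
    have L1 : Tendsto (fun n : ℕ => ∫ s in x1..x, FF (3 + 1 / ((n : ℝ) + 1)) (p n s) (θ n s)) atTop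
        (nhds (∫ s in x1..x, FF 3 (f s) s)) := by
      refine intervalIntegral.tendsto_integral_filter_of_dominated_convergence
        (fun _ => 1 + 4 + 2 * M) ?_ ?_ intervalIntegrable_const ?_
      · refine Eventually.of_forall fun n => Continuous.aestronglyMeasurable ?_
        have := hpc n
        have := hθc n
        unfold FF GG; fun_prop
      · filter_upwards [ev x hx] with n hn
        refine Eventually.of_forall fun s hs => ?_
        rw [uIoc_of_le hx.1.le] at hs
        have k := hn.2 s ⟨hs.1.le, hs.2⟩
        have k1 := abs_le.mp (hfM s)
        have k2 := abs_le.mp (hfM (s + ε n))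
        have hp : |p n s| ≤ M := abs_le.mpr ⟨by linarith, by linarith⟩
        have := FF_abs_le (l := 3 + 1 / ((n : ℝ) + 1)) (t := θ n s) hM0 hp
        have hl : |3 + 1 / ((n : ℝ) + 1)| ≤ 4 := by
          have h1 : 1 / ((n : ℝ) + 1) ≤ 1 := by
            rw [div_le_one (by positivity)]
            have : (0 : ℝ) ≤ n := Nat.cast_nonneg n
            linarith
          rw [abs_of_pos (by linarith [he0 n])]
          linarith
        rw [Real.norm_eq_abs]
        linarith
      · filter_upwards [mono_ae_cont hfm] with s hsc hs
        rw [uIoc_of_le hx.1.le] at hs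
        have hsI : s ∈ Icc x1 x := ⟨hs.1.le, hs.2⟩
        have t1 : Tendsto (fun n => p n s) atTop (nhds (f s)) := by
          refine tendsto_of_tendsto_of_tendsto_of_le_of_le' (g := fun _ => f s)
            (h := fun n => f (s + ε n)) tendsto_const_nhds ?_
            ((ev x hx).mono fun n hn => (hn.2 s hsI).1)
            ((ev x hx).mono fun n hn => (hn.2 s hsI).2)
          have : Tendsto (fun n => s + ε n) atTop (nhds s) := by
            simpa using tendsto_const_nhds.add hεlim
          exact hsc.tendsto.comp this
        have t2 := hθlim s (hI ⟨hs.1.le, hs.2.trans hx.2.le⟩)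
        have t3 : Tendsto (fun n : ℕ => 3 + 1 / ((n : ℝ) + 1)) atTop (nhds 3) := by
          simpa using (tendsto_const_nhds (x := (3 : ℝ))).add he
        exact FF_tendsto t3 t1 t2
    have L2 : Tendsto (fun n : ℕ => ∫ s in x1..x, FF (3 + 1 / ((n : ℝ) + 1)) (p n s) (θ n s)) atTop
        (nhds (x - x1)) := by
      have k := (hθlim x (hI ⟨hx.1.le, hx.2.le⟩)).sub (hθlim x1 (hI ⟨le_rfl, hx13⟩))
      refine k.congr' ?_
      filter_upwards [ev x hx] with n hn
      symm
      refine intervalIntegral.integral_eq_sub_of_hasDerivAt (fun s hs => ?_) ?_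
      · rw [uIcc_of_le hx.1.le] at hs
        exact (hc n).der s (hn.1 hs)
      · refine Continuous.intervalIntegrable ?_ _ _
        have := hpc n
        have := hθc n
        unfold FF GG; fun_prop
    exact tendsto_nhds_unique L1 L2
  have hcp : ∀ s ∈ Ioo x1 x3, ContinuousAt f s → s ≠ 0 → f s = tan s := by
    intro s hs hsc hs0
    have hmeas : Measurable fun y => FF 3 (f y) y := FF_meas hfm.measurable
    have hi : IntervalIntegrable (fun y => FF 3 (f y) y) volume x1 s := by
      refine IntervalIntegrable.mono_fun' (g := fun _ => 1 + |(3 : ℝ)| + 2 * M)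
        intervalIntegrable_const hmeas.aestronglyMeasurable (Eventually.of_forall fun x => ?_)
      exact FF_abs_le hM0 (hfM x)
    have hca : ContinuousAt (fun y => FF 3 (f y) y) s := FF_contAt hsc
    have d1 := intervalIntegral.integral_hasDerivAt_right hi
      (hmeas.stronglyMeasurable.stronglyMeasurableAtFilter) hca
    have d2 : HasDerivAt (fun y => ∫ t in x1..y, FF 3 (f t) t) 1 s := by
      refine ((hasDerivAt_id s).sub_const x1).congr_of_eventuallyEq ?_
      filter_upwards [Ioo_mem_nhds hs.1 hs.2] with y hy
      exact hInt y hy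
    have hF := d1.unique d2
    have hG : GG 3 (f s) s = 1 := by
      unfold FF at hF
      rcases max_choice (GG 3 (f s) s) (1 / 4) with hh | hh
      · rw [hh] at hF; exact hF
      · rw [hh] at hF; norm_num at hF
    have hsI := hI ⟨hs.1.le, hs.2.le⟩
    have hcos : 0 < cos s := cos_pos_of_mem_Ioo hsI
    have hsin : sin s ≠ 0 := by
      intro h0
      have := pi_pos
      exact hs0 ((sin_eq_zero_iff_of_lt_of_lt (by linarith [hsI.1]) (by linarith [hsI.2])).mp h0)
    rw [tan_eq_sin_div_cos, eq_div_iff hcos.ne']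
    have hsc1 := sin_sq_add_cos_sq s
    unfold GG at hG
    have : sin s * (f s * cos s - sin s) = 0 := by nlinarith
    rcases mul_eq_zero.mp this with hh | hh
    · exact absurd hh hsin
    · linarith
  have hdense : ∀ c d, x1 ≤ c → d ≤ x3 → c < d → ∃ s ∈ Ioo c d, f s = tan s := by
    intro c d hc1 hd1 hcd
    have hnull : volume ({s | ¬ ContinuousAt f s} ∪ {0}) = 0 :=
      measure_union_null (mono_ae_cont hfm) (by simp)
    by_contra hcon
    push Not at hcon
    have : volume (Ioo c d) = 0 := by
      refine measure_mono_null (fun s (hs : s ∈ Ioo c d) => ?_) hnull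
      by_contra hn
      rw [mem_union, not_or] at hn
      refine hcon s hs (hcp s ⟨by linarith [hs.1], by linarith [hs.2]⟩ ?_ hn.2)
      by_contra hn2
      exact hn.1 hn2
    rw [Real.volume_Ioo, ENNReal.ofReal_eq_zero] at this
    linarith
  have hzcos : cos z ≠ 0 := (cos_pos_of_mem_Ioo hz).ne'
  have htan : ContinuousAt tan z := continuousAt_tan.mpr hzcos
  rw [← hfe z ⟨hx1z.le, hzx3.le⟩]
  rcases lt_trichotomy (f z) (tan z) with hlt | heq | hgt
  · exfalso
    obtain ⟨r, hr, hb⟩ := Metric.eventually_nhds_iff_ball.mp (htan.eventually (lt_mem_nhds hlt))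
    rw [Real.ball_eq_Ioo] at hb
    obtain ⟨s, hs, hse⟩ := hdense (max x1 (z - r)) z (le_max_left _ _) hzx3.le
      (max_lt hx1z (by linarith))
    have k1 := hb s ⟨(le_max_right _ _).trans_lt hs.1, by linarith [hs.2]⟩
    have k2 := hfm hs.2.le
    linarith
  · exact heq
  · exfalso
    obtain ⟨r, hr, hb⟩ := Metric.eventually_nhds_iff_ball.mp (htan.eventually (gt_mem_nhds hgt))
    rw [Real.ball_eq_Ioo] at hb
    obtain ⟨s, hs, hse⟩ := hdense z (min x3 (z + r)) hx1z.le (min_le_left _ _)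
      (lt_min hzx3 (by linarith))
    have k1 := hb s ⟨by linarith [hs.1], hs.2.trans_le (min_le_right _ _)⟩
    have k2 := hfm hs.1.le
    linarith

/-! ### Part 8: identification of the measure and the eigenfunction -/

lemma lint_sec {x y : ℝ} (hx : x ∈ Ioo (-(π / 2)) (π / 2)) (hy : y ∈ Ioo (-(π / 2)) (π / 2))
    (hxy : x ≤ y) :
    ∫⁻ s in Ioc x y, ENNReal.ofReal (1 + tan s ^ 2) = ENNReal.ofReal (tan y - tan x) := by
  have hI : ∀ s ∈ uIcc x y, cos s ≠ 0 := by
    intro s hs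
    rw [uIcc_of_le hxy] at hs
    exact (cos_pos_of_mem_Ioo ⟨hx.1.trans_le hs.1, hs.2.trans_lt hy.2⟩).ne'
  have hc : ContinuousOn (fun s => 1 + tan s ^ 2) (uIcc x y) := fun s hs =>
    (continuousAt_const.add ((continuousAt_tan.mpr (hI s hs)).pow 2)).continuousWithinAt
  have hi : IntervalIntegrable (fun s => 1 + tan s ^ 2) volume x y := hc.intervalIntegrable
  have hd : ∀ s ∈ uIcc x y, HasDerivAt tan (1 + tan s ^ 2) s := by
    intro s hs
    refine (Real.hasDerivAt_tan (hI s hs)).congr_deriv ?_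
    have := hI s hs
    rw [tan_eq_sin_div_cos]
    field_simp
    linarith [sin_sq_add_cos_sq s]
  rw [← intervalIntegral.integral_eq_sub_of_hasDerivAt hd hi, intervalIntegral.integral_of_le hxy,
    ofReal_integral_eq_lintegral_ofReal hi.1 (Eventually.of_forall fun s => by positivity)]

lemma nu_restrict (P : PsiA) (hdom : ∀ x ∈ Ioo (-(π / 2)) (π / 2), x ∈ P.dom)
    (hpsi : ∀ x ∈ Ioo (-(π / 2)) (π / 2), P.psi x = tan x) :
    P.nu.restrict (Ioo (-(π / 2)) (π / 2)) =
      (volume.withDensity fun s => ENNReal.ofReal (1 + tan s ^ 2)).restrict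
        (Ioo (-(π / 2)) (π / 2)) := by
  set σ := (volume : Measure ℝ).withDensity fun s => ENNReal.ofReal (1 + tan s ^ 2) with hσ
  have hIoc : ∀ x ∈ Ioo (-(π / 2)) (π / 2), ∀ y ∈ Ioo (-(π / 2)) (π / 2), x ≤ y →
      P.nu (Ioc x y) = ENNReal.ofReal (tan y - tan x) ∧
      σ (Ioc x y) = ENNReal.ofReal (tan y - tan x) := by
    intro x hx y hy hxy
    refine ⟨?_, ?_⟩
    · rw [P.nu_eq (hdom x hx) (hdom y hy) hxy, hpsi x hx, hpsi y hy]
    · rw [hσ, withDensity_apply _ measurableSet_Ioc, lint_sec hx hy hxy]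
  set S : ℕ → Set ℝ := fun n => Ioc (-(π / 2) + 1 / ((n : ℝ) + 1)) (π / 2 - 1 / ((n : ℝ) + 1))
    with hS
  have he0 : ∀ n : ℕ, 0 < 1 / ((n : ℝ) + 1) := fun n => Nat.one_div_pos_of_nat
  have hU : Ioo (-(π / 2)) (π / 2) = ⋃ n, S n := by
    ext x
    simp only [hS, mem_iUnion, mem_Ioc, mem_Ioo]
    constructor
    · rintro ⟨h1, h2⟩
      obtain ⟨n, hn⟩ := exists_nat_one_div_lt (lt_min (sub_pos.mpr h1) (sub_pos.mpr h2))
      have k1 := hn.trans_le (min_le_left _ _)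
      have k2 := hn.trans_le (min_le_right _ _)
      exact ⟨n, by linarith, by linarith⟩
    · rintro ⟨n, h1, h2⟩
      have := he0 n
      exact ⟨by linarith, by linarith⟩
  rw [hU, Measure.restrict_iUnion_congr]
  intro n
  have hen := he0 n
  set c := -(π / 2) + 1 / ((n : ℝ) + 1) with hc
  set d := π / 2 - 1 / ((n : ℝ) + 1) with hd
  have hSn : S n = Ioc c d := rfl
  have key : ∀ a b, P.nu.restrict (S n) (Ioc a b) = σ.restrict (S n) (Ioc a b) := by
    intro a b
    rw [Measure.restrict_apply measurableSet_Ioc, Measure.restrict_apply measurableSet_Ioc, hSn,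
      Ioc_inter_Ioc]
    rcases le_total (min b d) (max a c) with hh | hh
    · rw [Ioc_eq_empty hh.not_gt, measure_empty, measure_empty]
    · have k1 : c ≤ max a c := le_max_right _ _
      have k2 : min b d ≤ d := min_le_right _ _
      obtain ⟨e1, e2⟩ := hIoc (max a c) ⟨by linarith, by linarith⟩ (min b d)
        ⟨by linarith, by linarith⟩ hh
      rw [e1]
      exact e2.symm
  have huniv : P.nu.restrict (S n) univ = σ.restrict (S n) univ := by
    have := key c d
    rw [Measure.restrict_apply measurableSet_Ioc, Measure.restrict_apply measurableSet_Ioc, hSn,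
      inter_self] at this
    rw [Measure.restrict_apply_univ, Measure.restrict_apply_univ]
    exact this
  have : IsFiniteMeasure (P.nu.restrict (S n)) := ⟨by
    rw [Measure.restrict_apply_univ, hSn]
    rcases le_total d c with hh | hh
    · rw [Ioc_eq_empty hh.not_gt, measure_empty]; exact ENNReal.zero_lt_top
    · rw [(hIoc c ⟨by linarith, by linarith⟩ d ⟨by linarith, by linarith⟩ hh).1]
      exact ENNReal.ofReal_lt_top⟩
  exact Measure.ext_of_Ioc_finite _ _ huniv fun a b _ => key a b

lemma qM_eq (P : PsiA) (hdom : ∀ x ∈ Ioo (-(π / 2)) (π / 2), x ∈ P.dom)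
    (hpsi : ∀ x ∈ Ioo (-(π / 2)) (π / 2), P.psi x = tan x) : P.qM = tanWeight := by
  have hd : P.dom = Ioo (-(π / 2)) (π / 2) := Subset.antisymm P.domSub hdom
  have hm : Measurable fun s : ℝ => tan s := by
    simp_rw [tan_eq_sin_div_cos]; exact measurable_sin.div measurable_cos
  have e2 : (volume.restrict (Ioo (-(π / 2)) (π / 2))).withDensity
      (fun x => ENNReal.ofReal (P.psi x ^ 2)) =
      (volume.restrict (Ioo (-(π / 2)) (π / 2))).withDensity
      (fun x => ENNReal.ofReal (tan x ^ 2)) := by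
    refine withDensity_congr_ae ?_
    filter_upwards [ae_restrict_mem measurableSet_Ioo] with x hx
    rw [hpsi x hx]
  rw [PsiA.qM, hd, e2, nu_restrict P hdom hpsi, sdiff_self, restrict_withDensity measurableSet_Ioo,
    ← withDensity_add_left (((hm.pow_const 2).const_add 1).ennreal_ofReal), tanWeight]
  simp only [Measure.restrict_empty, smul_zero, add_zero]
  congr 1
  funext x
  show ENNReal.ofReal _ + ENNReal.ofReal _ = _
  rw [← ENNReal.ofReal_add (by positivity) (by positivity)]
  congr 1
  ring

def clampI (x : ℝ) : ℝ := max (-(π / 2)) (min (π / 2) x)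

lemma clampI_of_mem {x : ℝ} (hx : x ∈ Ioo (-(π / 2)) (π / 2)) : clampI x = x := by
  rw [clampI, min_eq_right hx.2.le, max_eq_right hx.1.le]

lemma clampI_cos {x : ℝ} (hx : x ∉ Ioo (-(π / 2)) (π / 2)) : cos (clampI x) = 0 := by
  have hpi := pi_pos
  rcases le_or_gt x (-(π / 2)) with h | h
  · rw [clampI, min_eq_right (by linarith), max_eq_left h, cos_neg, cos_pi_div_two]
  · have h2 : π / 2 ≤ x := by
      by_contra hn
      push Not at hn
      exact hx ⟨h, hn⟩
    rw [clampI, min_eq_left h2, max_eq_right (by linarith), cos_pi_div_two]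

lemma clampI_cont : Continuous clampI := by unfold clampI; fun_prop

lemma cosSq_abs_le (x : ℝ) : |cosSq x| ≤ cos x ^ 2 := by
  unfold cosSq
  split_ifs
  · rw [abs_of_nonneg (sq_nonneg _)]
  · rw [abs_zero]; exact sq_nonneg _

lemma cosSq_deriv_end {e : ℝ} (he : cos e = 0) : HasDerivAt cosSq 0 e := by
  have h1 : cosSq =O[nhds e] fun y => ‖y - e‖ ^ 2 := by
    refine Asymptotics.IsBigO.of_bound 1 (Eventually.of_forall fun y => ?_)
    rw [one_mul, norm_pow, norm_norm, Real.norm_eq_abs, Real.norm_eq_abs]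
    refine (cosSq_abs_le y).trans ?_
    rw [← sq_abs]
    refine pow_le_pow_left₀ (abs_nonneg _) ?_ 2
    have hs : |sin e| ≤ 1 := abs_sin_le_one e
    have : cos y = - (sin (y - e) * sin e) := by
      have := cos_add (y - e) e
      rw [sub_add_cancel, he, mul_zero, zero_sub] at this
      exact this
    rw [this, abs_neg, abs_mul]
    have h2 : |sin (y - e)| ≤ |y - e| := abs_sin_le_abs
    nlinarith [abs_nonneg (sin (y - e)), abs_nonneg (sin e)]
  have h2 := h1.hasFDerivAt (𝕜 := ℝ) (by norm_num)
  have := h2.hasDerivAt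
  simpa using this

lemma cosSq_hasDerivAt (x : ℝ) :
    HasDerivAt cosSq (-2 * cos (clampI x) * sin (clampI x)) x := by
  have hpi := pi_pos
  by_cases hx : x ∈ Ioo (-(π / 2)) (π / 2)
  · rw [clampI_of_mem hx]
    have h1 : HasDerivAt (fun y => cos y ^ 2) (-2 * cos x * sin x) x := by
      refine ((hasDerivAt_cos x).pow 2).congr_deriv ?_
      simp
    refine h1.congr_of_eventuallyEq ?_
    filter_upwards [Ioo_mem_nhds hx.1 hx.2] with y hy
    exact if_pos hy
  · rw [clampI_cos hx, mul_zero, zero_mul]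
    by_cases he : cos x = 0
    · exact cosSq_deriv_end he
    · have hmem : x ∉ Icc (-(π / 2)) (π / 2) := by
        rintro ⟨h1, h2⟩
        rcases h1.eq_or_lt with h | h
        · exact he (by rw [← h, cos_neg, cos_pi_div_two])
        · rcases h2.eq_or_lt with h' | h'
          · exact he (by rw [h', cos_pi_div_two])
          · exact hx ⟨h, h'⟩
      refine (hasDerivAt_const x (0 : ℝ)).congr_of_eventuallyEq ?_
      filter_upwards [isClosed_Icc.isOpen_compl.mem_nhds hmem] with y hy
      exact if_neg fun h => hy (Ioo_subset_Icc_self h)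

lemma cosSq_test : TestFun (-(π / 2)) (π / 2) cosSq := by
  refine ⟨?_, fun x hx => if_neg hx⟩
  rw [contDiff_one_iff_deriv]
  refine ⟨fun x => (cosSq_hasDerivAt x).differentiableAt, ?_⟩
  have : deriv cosSq = fun x => -2 * cos (clampI x) * sin (clampI x) :=
    funext fun x => (cosSq_hasDerivAt x).deriv
  rw [this]
  have := clampI_cont
  fun_prop

lemma cosSq_den : ∫⁻ x in Ioo (-(π / 2)) (π / 2), ENNReal.ofReal (cosSq x ^ 2) =
    ENNReal.ofReal (∫ x in (-(π / 2))..(π / 2), cos x ^ 4) := by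
  rw [← lint_eq (g := fun x => cos x ^ 4) (by fun_prop) (fun x => by positivity)]
  refine setLIntegral_congr_fun measurableSet_Ioo fun x hx => ?_
  show ENNReal.ofReal (cosSq x ^ 2) = _
  rw [cosSq, if_pos hx]
  congr 1; ring

lemma cos4_pos : 0 < ∫ x in (-(π / 2))..(π / 2), cos x ^ 4 := by
  have hpi := pi_pos
  refine intervalIntegral.intervalIntegral_pos_of_pos_on
    (Continuous.intervalIntegrable (by fun_prop) _ _) (fun x hx => ?_) (by linarith)
  have := cos_pos_of_mem_Ioo hx
  positivity

lemma cosSq_rq : dirRQ (-(π / 2)) (π / 2) tanWeight cosSq = 3 := by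
  have hpi := pi_pos
  have hm : Measurable fun s : ℝ => tan s := by
    simp_rw [tan_eq_sin_div_cos]; exact measurable_sin.div measurable_cos
  have hcm : Measurable cosSq := cosSq_test.1.continuous.measurable
  have h1 : ∫⁻ x in Ioo (-(π / 2)) (π / 2), ENNReal.ofReal (deriv cosSq x ^ 2) =
      ENNReal.ofReal (∫ x in (-(π / 2))..(π / 2), 4 * cos x ^ 2 * sin x ^ 2) := by
    rw [← lint_eq (g := fun x => 4 * cos x ^ 2 * sin x ^ 2) (by fun_prop)
      (fun x => by positivity)]
    refine setLIntegral_congr_fun measurableSet_Ioo fun x hx => ?_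
    show ENNReal.ofReal (deriv cosSq x ^ 2) = _
    rw [(cosSq_hasDerivAt x).deriv, clampI_of_mem hx]
    congr 1; ring
  have h2 : ∫⁻ x in Ioo (-(π / 2)) (π / 2), ENNReal.ofReal (cosSq x ^ 2) ∂tanWeight =
      ENNReal.ofReal (∫ x in (-(π / 2))..(π / 2), (cos x ^ 4 + 2 * cos x ^ 2 * sin x ^ 2)) := by
    rw [← lint_eq (g := fun x => cos x ^ 4 + 2 * cos x ^ 2 * sin x ^ 2) (by fun_prop)
      (fun x => by positivity), tanWeight, restrict_withDensity measurableSet_Ioo,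
      Measure.restrict_restrict measurableSet_Ioo, inter_self,
      lintegral_withDensity_eq_lintegral_mul _
        (by fun_prop) ((hcm.pow_const 2).ennreal_ofReal)]
    refine setLIntegral_congr_fun measurableSet_Ioo fun x hx => ?_
    show ENNReal.ofReal _ * ENNReal.ofReal (cosSq x ^ 2) = ENNReal.ofReal _
    rw [← ENNReal.ofReal_mul (by positivity), cosSq, if_pos hx, tan_eq_sin_div_cos]
    have := cos_pos_of_mem_Ioo hx
    congr 1
    field_simp
  have h3 : (∫ x in (-(π / 2))..(π / 2), 4 * cos x ^ 2 * sin x ^ 2) +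
      (∫ x in (-(π / 2))..(π / 2), (cos x ^ 4 + 2 * cos x ^ 2 * sin x ^ 2)) =
      3 * ∫ x in (-(π / 2))..(π / 2), cos x ^ 4 := by
    have hd : ∀ x ∈ uIcc (-(π / 2)) (π / 2), HasDerivAt (fun y => -2 * (cos y ^ 3 * sin y))
        (6 * cos x ^ 2 * sin x ^ 2 - 2 * cos x ^ 4) x := by
      intro x _
      refine ((((hasDerivAt_cos x).pow 3).mul (hasDerivAt_sin x)).const_mul (-2)).congr_deriv ?_
      simp
      ring
    have hz := intervalIntegral.integral_eq_sub_of_hasDerivAt hd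
      (Continuous.intervalIntegrable (by fun_prop) _ _)
    simp only [cos_neg, cos_pi_div_two] at hz
    have i1 : IntervalIntegrable (fun x => 4 * cos x ^ 2 * sin x ^ 2) volume (-(π / 2)) (π / 2) :=
      Continuous.intervalIntegrable (by fun_prop) _ _
    have i2 : IntervalIntegrable (fun x => cos x ^ 4 + 2 * cos x ^ 2 * sin x ^ 2) volume
      (-(π / 2)) (π / 2) := Continuous.intervalIntegrable (by fun_prop) _ _
    have i3 : IntervalIntegrable (fun x => 3 * cos x ^ 4) volume (-(π / 2)) (π / 2) :=
      Continuous.intervalIntegrable (by fun_prop) _ _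
    rw [← intervalIntegral.integral_add i1 i2, ← intervalIntegral.integral_const_mul, ← sub_eq_zero,
      ← intervalIntegral.integral_sub (i1.add i2) i3]
    rw [← show (_ : ℝ) = 0 from hz.trans (by ring)]
    congr 1
    funext x
    ring
  have hp := cos4_pos
  rw [dirRQ, h1, h2, cosSq_den, ← ENNReal.ofReal_add, h3, ENNReal.ofReal_mul (by norm_num),
    ENNReal.mul_div_cancel_right]
  · norm_num
  · rw [ne_eq, ENNReal.ofReal_eq_zero, not_le]; exact hp
  · exact ENNReal.ofReal_ne_top
  · exact intervalIntegral.integral_nonneg (by linarith) fun x _ => by positivity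
  · exact intervalIntegral.integral_nonneg (by linarith) fun x _ => by positivity

/-- Theorem 1.4 / `t:1d`: for `q = ψ' + ψ²` with `ψ ∈ 𝒜(I_π)` one has
`λ₁(I_π, q) ≥ 3`, with equality if and only if `q(x) = 1 + 2 tan² x` (as measures on `I_π`),
and in the equality case an eigenfunction is `cos² x`. -/
theorem sharp_one_dimensional_lower_bound (P : PsiA) :
    3 ≤ lam1 (-(π / 2)) (π / 2) P.qM ∧
    (lam1 (-(π / 2)) (π / 2) P.qM = 3 ↔ P.qM = tanWeight) ∧
    (P.qM = tanWeight → dirRQ (-(π / 2)) (π / 2) P.qM cosSq = 3) := by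
  refine ⟨lower_bound P, ⟨fun h => ?_, fun h => ?_⟩, fun h => by rw [h]; exact cosSq_rq⟩
  · obtain ⟨h1, h2⟩ := psi_eq_tan P fun l hl ε0 hε0 => all_good P h hl hε0
    exact qM_eq P h1 h2
  · refine le_antisymm ?_ (lower_bound P)
    rw [h, ← cosSq_rq]
    refine iInf₂_le cosSq ⟨cosSq_test, ?_⟩
    rw [cosSq_den, ne_eq, ENNReal.ofReal_eq_zero, not_le]
    exact cos4_pos
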